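/- Under the Pólya urn hypotheses, let p ≥ 2 be fixed and assume that the family {|X_{n+1} − X_n|^p : n ≥ 0} is uniformly integrable. Assume also that either (a) Re λ₂ < b/2 and (X_n − E X_n)/√n converges in distribution to N(0, Σ), or (b) Re λ₂ = b/2 and (X_n − E X_n)/√(n (log n)^{2ν₂+1}) converges in distribution to N(0, Σ), where ν₂ := ν_{λ₂}. Then the corresponding convergence in distribution holds together with convergence of all absolute moments of order r with 1 ≤ r ≤ p and of all mixed moments of total degree at most p. -/

import Mathlib

open MeasureTheory Matrix Filter

/-- `P` is the spectral projection of `A` for the eigenvalue `lam`: it is the identity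
on the generalized eigenspace E_lam = ker((A − lam I)^q) and vanishes on the generalized
eigenspace E_mu = ker((A − mu I)^q) of every other eigenvalue `mu`. Since ℂ^q is the
direct sum of the generalized eigenspaces, these conditions determine `P` uniquely. -/
def IsSpectralProj {q : ℕ} (A : Matrix (Fin q) (Fin q) ℂ) (lam : ℂ)
    (P : Matrix (Fin q) (Fin q) ℂ) : Prop :=
  (∀ v : Fin q → ℂ, ((A - lam • 1) ^ q).mulVec v = 0 → P.mulVec v = v) ∧
  ∀ mu : ℂ, mu ≠ lam → ∀ v : Fin q → ℂ, ((A - mu • 1) ^ q).mulVec v = 0 → P.mulVec v = 0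

/-- `ν` is the nilpotency index ν_lam of N_lam := (A − lam I) P_lam, i.e. the unique
integer ν ≥ 0 with N_lam^(ν+1) = 0 and (ν = 0 or N_lam^ν ≠ 0). -/
def NilIndexOf {q : ℕ} (A : Matrix (Fin q) (Fin q) ℂ) (lam : ℂ)
    (P : Matrix (Fin q) (Fin q) ℂ) (ν : ℕ) : Prop :=
  ((A - lam • 1) * P) ^ (ν + 1) = 0 ∧ (ν = 0 ∨ ((A - lam • 1) * P) ^ ν ≠ 0)

/-- `mu` is a candidate for the second eigenvalue λ₂ in the ordered listing
λ₁, λ₂, …, λ_q of the eigenvalues of `Ac` with algebraic multiplicity (λ₁ = b being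
first): either `mu` is an eigenvalue different from b, or `mu = b` and b occurs with
algebraic multiplicity at least 2. -/
def MemSecondEigSet {q : ℕ} (Ac : Matrix (Fin q) (Fin q) ℂ) (b : ℝ) (mu : ℂ) : Prop :=
  (mu ≠ (b : ℂ) ∧ mu ∈ spectrum ℂ Ac) ∨
  (mu = (b : ℂ) ∧ 2 ≤ Polynomial.rootMultiplicity (b : ℂ) (Matrix.charpoly Ac))

theorem bern_up {s u : ℝ} (hs : 1 ≤ s) (hu : 0 < u) : u ^ s ≤ 1 + s * (u - 1) * u ^ (s - 1) := by
  have h := one_add_mul_self_le_rpow_one_add (s := u⁻¹ - 1) (by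
    have : 0 < u⁻¹ := inv_pos.2 hu
    linarith) hs
  have e : (1 + (u⁻¹ - 1)) = u⁻¹ := by ring
  rw [e, Real.inv_rpow hu.le] at h
  have hp : 0 < u ^ s := Real.rpow_pos_of_pos hu s
  have e2 : u ^ (s - 1) = u ^ s / u := by rw [Real.rpow_sub hu, Real.rpow_one]
  rw [e2]
  have h2 : (1 + s * (u⁻¹ - 1)) * u ^ s ≤ 1 := by
    calc _ ≤ (u ^ s)⁻¹ * u ^ s := by gcongr
      _ = 1 := inv_mul_cancel₀ hp.ne'
  have e3 : (1 + s * (u⁻¹ - 1)) * u ^ s = u ^ s - s * (u - 1) * (u ^ s / u) := by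
    field_simp
    ring
  linarith

theorem rpow_taylor {p t : ℝ} (hp : 2 ≤ p) (ht : |t| ≤ 1) :
    (1 + t) ^ p ≤ 1 + p * t + (p * (p * 2 ^ p)) * t ^ 2 := by
  have h2p : (1 : ℝ) ≤ 2 ^ p := Real.one_le_rpow (by norm_num) (by linarith)
  obtain ⟨h1, h2⟩ := abs_le.1 ht
  rcases eq_or_lt_of_le h1 with h | h
  · rw [← h]
    norm_num
    rw [Real.zero_rpow (by linarith)]
    nlinarith [mul_le_mul (show (1:ℝ) ≤ p by linarith) h2p (by norm_num) (by linarith)]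
  · have hu : 0 < 1 + t := by linarith
    have A := bern_up (s := p) (by linarith) hu
    have key : t * (1 + t) ^ (p - 1) ≤ t + (p * 2 ^ p) * t ^ 2 := by
      rcases le_or_gt 0 t with h0 | h0
      · have B := bern_up (s := p - 1) (by linarith) hu
        have hc : (1 + t) ^ (p - 1 - 1) ≤ 2 ^ p := by
          calc (1 + t) ^ (p - 1 - 1) ≤ 2 ^ (p - 1 - 1) :=
                Real.rpow_le_rpow hu.le (by linarith) (by linarith)
            _ ≤ 2 ^ p := Real.rpow_le_rpow_of_exponent_le (by norm_num) (by linarith)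
        have : (1 + t) ^ (p - 1) ≤ 1 + p * t * 2 ^ p := by
          refine B.trans ?_
          have : (p - 1) * (1 + t - 1) * (1 + t) ^ (p - 1 - 1) ≤ p * t * 2 ^ p := by
            apply mul_le_mul _ hc (by positivity) (by nlinarith)
            nlinarith
          linarith
        nlinarith
      · have B := one_add_mul_self_le_rpow_one_add (s := t) (p := p - 1) h1 (by linarith)
        have : t * (1 + t) ^ (p - 1) ≤ t * (1 + (p - 1) * t) :=
          mul_le_mul_of_nonpos_left B h0.le
        have h3 : (p - 1) * t ^ 2 ≤ (p * 2 ^ p) * t ^ 2 := by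
          apply mul_le_mul_of_nonneg_right _ (sq_nonneg t)
          nlinarith
        nlinarith
    have e : p * (1 + t - 1) * (1 + t) ^ (p - 1) = p * (t * (1 + t) ^ (p - 1)) := by ring
    rw [e] at A
    have := mul_le_mul_of_nonneg_left key (show (0:ℝ) ≤ p by linarith)
    nlinarith

theorem ptwise {p : ℝ} (hp : 2 ≤ p) : ∃ C : ℝ, 0 < C ∧ ∀ x y : ℝ,
    |x + y| ^ p ≤ |x| ^ p + p * (|x| ^ (p - 2) * x * y) + C * (|x| ^ (p - 2) * y ^ 2 + |y| ^ p) := by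
  have h2p : (1 : ℝ) ≤ 2 ^ p := Real.one_le_rpow (by norm_num) (by linarith)
  refine ⟨p * (p * 2 ^ p) + (2 ^ p + p), by positivity, fun x y => ?_⟩
  have hy0 : 0 ≤ |y| ^ p := by positivity
  have hx0 : 0 ≤ |x| ^ p := by positivity
  have hxy0 : 0 ≤ |x| ^ (p - 2) * y ^ 2 := by positivity
  have hC1 : 0 ≤ p * (p * 2 ^ p) := by positivity
  rcases le_or_gt |y| |x| with h | h
  · by_cases hx : x = 0
    · have hy : y = 0 := by simpa [hx] using h
      subst hx hy
      simp [Real.zero_rpow (show p ≠ 0 by linarith)]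
    · have hxp : 0 < |x| := abs_pos.2 hx
      have ht : |y / x| ≤ 1 := by rw [abs_div]; exact (div_le_one hxp).2 h
      have B := rpow_taylor hp ht
      have h1 : 0 ≤ 1 + y / x := by linarith [(abs_le.1 ht).1]
      have e1 : |x + y| ^ p = |x| ^ p * (1 + y / x) ^ p := by
        rw [← Real.mul_rpow hxp.le h1]
        congr 1
        rw [← abs_of_nonneg h1, ← abs_mul]
        congr 1
        field_simp
      have e2 : |x| ^ p = |x| ^ (p - 2) * x ^ 2 := by
        rw [← sq_abs x, ← Real.rpow_natCast |x| 2, ← Real.rpow_add hxp]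
        congr 1
        push_cast; ring
      rw [e1]
      have := mul_le_mul_of_nonneg_left B hx0
      have e3 : |x| ^ p * (1 + p * (y / x) + (p * (p * 2 ^ p)) * (y / x) ^ 2) =
          |x| ^ p + p * (|x| ^ (p - 2) * x * y) + (p * (p * 2 ^ p)) * (|x| ^ (p - 2) * y ^ 2) := by
        rw [e2]; field_simp
      rw [e3] at this
      have h5 : 0 ≤ (p * (p * 2 ^ p)) * |y| ^ p := by positivity
      have h6 : 0 ≤ (2 ^ p + p) * (|x| ^ (p - 2) * y ^ 2 + |y| ^ p) := by positivity
      nlinarith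
  · have hyp : 0 < |y| := lt_of_le_of_lt (abs_nonneg _) h
    have h1 : |x + y| ^ p ≤ 2 ^ p * |y| ^ p := by
      rw [← Real.mul_rpow (by norm_num) hyp.le]
      apply Real.rpow_le_rpow (abs_nonneg _) _ (by linarith)
      linarith [abs_add_le x y]
    have h2 : |(|x| ^ (p - 2) * x * y)| ≤ |y| ^ p := by
      rw [abs_mul, abs_mul, abs_of_nonneg (by positivity : 0 ≤ |x| ^ (p - 2))]
      have : |y| ^ p = |y| ^ (p - 2) * |y| * |y| := by
        rw [mul_assoc, ← sq, ← Real.rpow_natCast |y| 2, ← Real.rpow_add hyp]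
        congr 1; push_cast; ring
      rw [this]
      gcongr
    have h3 := (abs_le.1 h2).1
    have h4 : 0 ≤ (p * (p * 2 ^ p)) * (|x| ^ (p - 2) * y ^ 2 + |y| ^ p) := by positivity
    have h5 : 0 ≤ (2 ^ p + p) * (|x| ^ (p - 2) * y ^ 2) := by positivity
    nlinarith

theorem young_simple {p a b : ℝ} (hp : 2 ≤ p) (ha : 0 ≤ a) (hb : 0 ≤ b) :
    a ^ (p - 2) * b ^ 2 ≤ a ^ p + b ^ p := by
  have h0 : (0:ℝ) ≤ p - 2 := by linarith
  have e : ∀ c : ℝ, 0 ≤ c → c ^ p = c ^ (p - 2) * c ^ 2 := fun c hc => by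
    rw [← Real.rpow_natCast c 2, ← Real.rpow_add' hc (by push_cast; linarith)]
    congr 1; push_cast; ring
  have hap : 0 ≤ a ^ p := by positivity
  have hbp : 0 ≤ b ^ p := by positivity
  rcases le_total a b with h | h
  · have : a ^ (p - 2) * b ^ 2 ≤ b ^ (p - 2) * b ^ 2 := by gcongr
    rw [← e b hb] at this
    linarith
  · have : a ^ (p - 2) * b ^ 2 ≤ a ^ (p - 2) * a ^ 2 := by gcongr
    rw [← e a ha] at this
    linarith

theorem young_scaled {p a b R r : ℝ} (hp : 2 ≤ p) (ha : 0 ≤ a) (hb : 0 ≤ b) (hR : 0 < R)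
    (hr : 0 < r) :
    a ^ (p - 2) * b ^ 2 ≤ R ^ (p - 2) * r ^ 2 * (a ^ p / R ^ p + b ^ p / r ^ p) := by
  have h := young_simple hp (div_nonneg ha hR.le) (div_nonneg hb hr.le)
  rw [Real.div_rpow ha hR.le, Real.div_rpow ha hR.le, Real.div_rpow hb hr.le] at h
  have hR2 : 0 < R ^ (p - 2) := Real.rpow_pos_of_pos hR _
  have := mul_le_mul_of_nonneg_left h (show 0 ≤ R ^ (p - 2) * r ^ 2 by positivity)
  refine le_trans (le_of_eq ?_) this
  field_simp

theorem integrable_abs_rpow {Ω : Type*} {m0 : MeasurableSpace Ω} {μ : Measure Ω}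
    {p : ℝ} (hp : 2 ≤ p) {x : Ω → ℝ} (hx : MemLp x (ENNReal.ofReal p) μ) :
    Integrable (fun ω => |x ω| ^ p) μ := by
  have := hx.integrable_norm_rpow (by simp; linarith) (by simp)
  rwa [ENNReal.toReal_ofReal (by linarith)] at this

theorem rio_step {Ω : Type*} {m m0 : MeasurableSpace Ω} (μ : Measure Ω) [IsProbabilityMeasure μ]
    (hm : m ≤ m0)
    {p C : ℝ} (hp : 2 ≤ p) (hC0 : 0 < C)
    (hC : ∀ x y : ℝ, |x + y| ^ p ≤ |x| ^ p + p * (|x| ^ (p - 2) * x * y)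
      + C * (|x| ^ (p - 2) * y ^ 2 + |y| ^ p))
    {x y : Ω → ℝ} (hxm : StronglyMeasurable[m] x) (hx : MemLp x (ENNReal.ofReal p) μ)
    (hy : MemLp y (ENNReal.ofReal p) μ) (hy0 : μ[y | m] =ᵐ[μ] 0) {R r : ℝ} (hR : 0 < R)
    (hr : 0 < r) (hxR : ∫ ω, |x ω| ^ p ∂μ ≤ R ^ p) (hyr : ∫ ω, |y ω| ^ p ∂μ ≤ r ^ p) :
    ∫ ω, |x ω + y ω| ^ p ∂μ ≤ R ^ p + C * (2 * (R ^ (p - 2) * r ^ 2) + r ^ p) := by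
  have ix := integrable_abs_rpow hp hx
  have iy := integrable_abs_rpow hp hy
  have ixy := integrable_abs_rpow hp (hx.add hy)
  have hy1 : Integrable y μ := hy.integrable (by
    rw [← ENNReal.ofReal_one]; exact ENNReal.ofReal_le_ofReal (by linarith))
  have hfm : StronglyMeasurable[m] (fun ω => |x ω| ^ (p - 2) * x ω) := by
    have : Measurable[m] x := hxm.measurable
    apply Measurable.stronglyMeasurable
    fun_prop
  have hfy : Integrable ((fun ω => |x ω| ^ (p - 2) * x ω) * y) μ := by
    refine (ix.add iy).mono' ((hfm.mono hm).aestronglyMeasurable.mul hy.1) ?_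
    filter_upwards with ω
    simp only [Pi.mul_apply, Pi.add_apply, Real.norm_eq_abs]
    rw [abs_mul, abs_mul, abs_of_nonneg (by positivity : 0 ≤ |x ω| ^ (p - 2))]
    have e : ∀ c : ℝ, 0 ≤ c → c ^ p = c ^ (p - 2) * c ^ 2 := fun c hc => by
      rw [← Real.rpow_natCast c 2, ← Real.rpow_add' hc (by push_cast; linarith)]
      congr 1; push_cast; ring
    have h0 : (0:ℝ) ≤ p - 2 := by linarith
    have hap : 0 ≤ |x ω| ^ p := by positivity
    have hbp : 0 ≤ |y ω| ^ p := by positivity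
    rcases le_total |x ω| |y ω| with h | h
    · have : |x ω| ^ (p - 2) * |x ω| * |y ω| ≤ |y ω| ^ (p - 2) * |y ω| * |y ω| := by gcongr
      have e1 := e |y ω| (abs_nonneg _)
      rw [mul_assoc, mul_assoc, ← sq |y ω|, ← e1] at this
      linarith
    · have : |x ω| ^ (p - 2) * |x ω| * |y ω| ≤ |x ω| ^ (p - 2) * |x ω| * |x ω| := by gcongr
      have e1 := e |x ω| (abs_nonneg _)
      rw [mul_assoc, mul_assoc, ← sq |x ω|, ← e1] at this
      linarith
  have hcross : ∫ ω, (|x ω| ^ (p - 2) * x ω) * y ω ∂μ = 0 := by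
    have h1 := condExp_mul_of_stronglyMeasurable_left hfm hfy hy1
    have h2 : μ[(fun ω => |x ω| ^ (p - 2) * x ω) * y | m] =ᵐ[μ] 0 := by
      filter_upwards [h1, hy0] with ω h1 h2
      rw [h1, Pi.mul_apply, h2]; simp
    have h3 := integral_condExp (μ := μ) hm (f := (fun ω => |x ω| ^ (p - 2) * x ω) * y)
    rw [integral_congr_ae h2] at h3
    simpa using h3.symm
  have hbound : ∀ ω, |x ω + y ω| ^ p ≤ |x ω| ^ p + p * (|x ω| ^ (p - 2) * x ω * y ω)
      + C * (R ^ (p - 2) * r ^ 2 * (|x ω| ^ p / R ^ p + |y ω| ^ p / r ^ p) + |y ω| ^ p) := by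
    intro ω
    refine (hC (x ω) (y ω)).trans ?_
    have := young_scaled hp (abs_nonneg (x ω)) (abs_nonneg (y ω)) hR hr
    rw [sq_abs] at this
    gcongr
  have hRp : 0 < R ^ p := Real.rpow_pos_of_pos hR _
  have hrp : 0 < r ^ p := Real.rpow_pos_of_pos hr _
  have i1 : Integrable (fun ω => p * (|x ω| ^ (p - 2) * x ω * y ω)) μ := hfy.const_mul p
  have i2 : Integrable (fun ω => |x ω| ^ p / R ^ p + |y ω| ^ p / r ^ p) μ :=
    (ix.div_const _).add (iy.div_const _)
  have i3 : Integrable (fun ω => R ^ (p - 2) * r ^ 2 * (|x ω| ^ p / R ^ p + |y ω| ^ p / r ^ p)) μ :=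
    i2.const_mul _
  have i4 : Integrable (fun ω =>
      C * (R ^ (p - 2) * r ^ 2 * (|x ω| ^ p / R ^ p + |y ω| ^ p / r ^ p) + |y ω| ^ p)) μ :=
    (i3.add iy).const_mul _
  calc ∫ ω, |x ω + y ω| ^ p ∂μ
      ≤ ∫ ω, (|x ω| ^ p + p * (|x ω| ^ (p - 2) * x ω * y ω)
      + C * (R ^ (p - 2) * r ^ 2 * (|x ω| ^ p / R ^ p + |y ω| ^ p / r ^ p) + |y ω| ^ p)) ∂μ :=
        integral_mono ixy ((ix.add i1).add i4) hbound
    _ = ∫ ω, |x ω| ^ p ∂μ + C * (R ^ (p - 2) * r ^ 2 *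
          ((∫ ω, |x ω| ^ p ∂μ) / R ^ p + (∫ ω, |y ω| ^ p ∂μ) / r ^ p) + ∫ ω, |y ω| ^ p ∂μ) := by
        rw [integral_add (by exact ix.add i1) i4, integral_add ix i1, integral_const_mul, hcross,
          integral_const_mul, integral_add i3 iy, integral_const_mul,
          integral_add (ix.div_const _) (iy.div_const _), integral_div, integral_div]
        ring
    _ ≤ R ^ p + C * (R ^ (p - 2) * r ^ 2 * (1 + 1) + r ^ p) := by
        gcongr
        · exact (div_le_one hRp).2 hxR
        · exact (div_le_one hrp).2 hyr
    _ = _ := by ring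

theorem rio_numeric {p C : ℝ} (hp : 2 ≤ p) (hC0 : 0 < C) {W v : ℝ} (hW : 0 < W) (hv : 0 < v) :
    let K := 1 + 4 * C
    √(K * W) ^ p + C * (2 * (√(K * W) ^ (p - 2) * (√v) ^ 2) + √v ^ p) ≤ √(K * (W + v)) ^ p := by
  intro K
  have hK : 1 ≤ K := by simp only [K]; linarith
  have hK0 : 0 < K := by linarith
  have sq : ∀ z : ℝ, 0 < z → ∀ s : ℝ, √z ^ s = z ^ (s / 2) := fun z hz s => by
    rw [Real.sqrt_eq_rpow, ← Real.rpow_mul hz.le]; congr 1; ring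
  rw [sq _ (by positivity), sq _ (by positivity), sq _ hv, sq _ (by positivity), Real.sq_sqrt hv.le,
    Real.mul_rpow hK0.le hW.le, Real.mul_rpow hK0.le hW.le, Real.mul_rpow hK0.le (by positivity)]
  set s := p / 2 with hs
  have hs1 : 1 ≤ s := by linarith
  have e : (p - 2) / 2 = s - 1 := by simp only [hs]; ring
  rw [e]
  have hKs : K ^ s = K ^ (s - 1) * K := by
    rw [← Real.rpow_add_one hK0.ne']; congr 1; ring
  have hKs1 : 1 ≤ K ^ (s - 1) := Real.one_le_rpow hK (by linarith)
  have hWs : W ^ s = W ^ (s - 1) * W := by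
    rw [← Real.rpow_add_one hW.ne']; congr 1; ring
  have a1 : W ^ s + W ^ (s - 1) * v ≤ (W + v) ^ s := by
    have h := one_add_mul_self_le_rpow_one_add (s := v / W) (p := s)
      (by have : 0 < v / W := by positivity
          linarith) hs1
    have e1 : W + v = W * (1 + v / W) := by field_simp
    rw [e1, Real.mul_rpow hW.le (by positivity)]
    have h2 : 1 + v / W ≤ (1 + v / W) ^ s := by
      have : v / W ≤ s * (v / W) := le_mul_of_one_le_left (by positivity) hs1
      linarith
    have := mul_le_mul_of_nonneg_left h2 (show 0 ≤ W ^ s by positivity)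
    refine le_trans (le_of_eq ?_) this
    rw [hWs]; field_simp
  have a2 : W ^ s + v ^ s ≤ (W + v) ^ s := Real.add_rpow_le_rpow_add hW.le hv.le hs1
  have p1 : 0 < W ^ (s - 1) * v := by positivity
  have p2 : 0 < v ^ s := by positivity
  have a3 : W ^ s + (W ^ (s - 1) * v) / 2 + v ^ s / 2 ≤ (W + v) ^ s := by linarith
  have a4 := mul_le_mul_of_nonneg_left a3 (show 0 ≤ K ^ s by positivity)
  refine le_trans ?_ a4
  have b1 : 2 * C * (K ^ (s - 1) * (W ^ (s - 1) * v)) ≤ K ^ s * ((W ^ (s - 1) * v) / 2) := by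
    rw [hKs]
    have : 2 * C ≤ K / 2 := by simp only [K]; linarith
    calc 2 * C * (K ^ (s - 1) * (W ^ (s - 1) * v))
        ≤ K / 2 * (K ^ (s - 1) * (W ^ (s - 1) * v)) := by gcongr
      _ = _ := by ring
  have b2 : C * v ^ s ≤ K ^ s * (v ^ s / 2) := by
    have : C ≤ K ^ s / 2 := by
      rw [hKs]
      have : K ≤ K ^ (s - 1) * K := le_mul_of_one_le_left hK0.le hKs1
      have : 2 * C ≤ K := by simp only [K]; linarith
      linarith
    calc C * v ^ s ≤ K ^ s / 2 * v ^ s := by gcongr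
      _ = _ := by ring
  nlinarith

theorem rio {p : ℝ} (hp : 2 ≤ p) : ∃ K : ℝ, 0 < K ∧ ∀ {Ω : Type} {m0 : MeasurableSpace Ω}
    (μ : Measure Ω) [IsProbabilityMeasure μ] (ℱ : Filtration ℕ m0) (y : ℕ → Ω → ℝ) (v : ℕ → ℝ)
    (_ : ∀ k, 0 < v k) (_ : ∀ k, StronglyMeasurable[ℱ (k + 1)] (y k))
    (_ : ∀ k, MemLp (y k) (ENNReal.ofReal p) μ) (_ : ∀ k, μ[y k | ℱ k] =ᵐ[μ] 0)
    (_ : ∀ k, ∫ ω, |y k ω| ^ p ∂μ ≤ √(v k) ^ p) (η : ℝ) (_ : 0 < η) (n : ℕ),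
    ∫ ω, |∑ k ∈ Finset.range n, y k ω| ^ p ∂μ ≤ √(K * (η + ∑ k ∈ Finset.range n, v k)) ^ p := by
  obtain ⟨C, hC0, hC⟩ := ptwise hp
  refine ⟨1 + 4 * C, by positivity, ?_⟩
  intro Ω m0 μ _ ℱ y v hv hym hyp hy0 hyv η hη n
  induction n with
  | zero =>
    simp only [Finset.range_zero, Finset.sum_empty, abs_zero, integral_const]
    rw [Real.zero_rpow (by linarith)]
    simp
    positivity
  | succ n ih =>
    have hsm : StronglyMeasurable[ℱ n] (fun ω => ∑ k ∈ Finset.range n, y k ω) := by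
      apply Finset.stronglyMeasurable_fun_sum
      intro k hk
      exact (hym k).mono (ℱ.mono (Finset.mem_range.1 hk))
    have hsp : MemLp (fun ω => ∑ k ∈ Finset.range n, y k ω) (ENNReal.ofReal p) μ :=
      memLp_finsetSum _ (fun k _ => hyp k)
    have hW : 0 < η + ∑ k ∈ Finset.range n, v k := by
      have := Finset.sum_nonneg (s := Finset.range n) (fun k _ => (hv k).le)
      linarith
    have h := rio_step μ (ℱ.le n) hp hC0 hC hsm hsp (hyp n) (hy0 n)
      (R := √((1 + 4 * C) * (η + ∑ k ∈ Finset.range n, v k))) (r := √(v n))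
      (by positivity) (Real.sqrt_pos.2 (hv n)) ih (hyv n)
    simp only [Finset.sum_range_succ]
    refine h.trans ((rio_numeric hp hC0 hW (hv n)).trans (le_of_eq ?_))
    rw [add_assoc]

theorem eLpNorm_le_ofReal_iff {Ω : Type*} {m0 : MeasurableSpace Ω} {μ : Measure Ω}
    {p r : ℝ} (hp : 2 ≤ p) (hr : 0 ≤ r) {x : Ω → ℝ} (hx : MemLp x (ENNReal.ofReal p) μ) :
    eLpNorm x (ENNReal.ofReal p) μ ≤ ENNReal.ofReal r ↔ ∫ ω, |x ω| ^ p ∂μ ≤ r ^ p := by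
  have hp0 : 0 < p := by linarith
  rw [hx.eLpNorm_eq_integral_rpow_norm (by simp; linarith) (by simp),
    ENNReal.toReal_ofReal hp0.le, ENNReal.ofReal_le_ofReal_iff hr,
    Real.rpow_inv_le_iff_of_pos (integral_nonneg fun ω => by positivity) hr hp0]
  rfl

theorem mart_norm_bound {P C : ℝ} (hP : 2 ≤ P) (hC : 0 ≤ C) : ∃ K : ℝ, 0 < K ∧
    ∀ {Ω : Type} {m0 : MeasurableSpace Ω}
    (μ : Measure Ω) [IsProbabilityMeasure μ] (ℱ : Filtration ℕ m0) (ξ : ℕ → Ω → ℝ) (B : ℝ)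
    (_ : 0 < B) (_ : ∀ k, StronglyMeasurable[ℱ (k + 1)] (ξ k))
    (_ : ∀ k, eLpNorm (ξ k) (ENNReal.ofReal P) μ ≤ ENNReal.ofReal B) (c : ℕ → ℝ) (n : ℕ)
    (_ : ∑ k ∈ Finset.range n, c k ^ 2 ≤ C),
    eLpNorm (fun ω => ∑ k ∈ Finset.range n, c k * (ξ k ω - μ[ξ k | ℱ k] ω)) (ENNReal.ofReal P) μ
      ≤ ENNReal.ofReal (K * B) := by
  obtain ⟨K, hK, H⟩ := rio hP
  refine ⟨2 * √(K * (2 + C)), by positivity, ?_⟩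
  intro Ω m0 μ _ ℱ ξ B hB hξm hξ c n hc
  have h1P : 1 ≤ ENNReal.ofReal P := by
    rw [← ENNReal.ofReal_one]; exact ENNReal.ofReal_le_ofReal (by linarith)
  have hξL : ∀ k, MemLp (ξ k) (ENNReal.ofReal P) μ := fun k =>
    ⟨((hξm k).mono (ℱ.le _)).aestronglyMeasurable, (hξ k).trans_lt ENNReal.ofReal_lt_top⟩
  have hdL : ∀ k, MemLp (ξ k - μ[ξ k | ℱ k]) (ENNReal.ofReal P) μ := fun k =>
    (hξL k).sub ((hξL k).condExp h1P)
  have hyL : ∀ k, MemLp (fun ω => c k * (ξ k ω - μ[ξ k | ℱ k] ω)) (ENNReal.ofReal P) μ := fun k =>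
    (hdL k).const_mul (c k)
  have hd2 : ∀ k, eLpNorm (ξ k - μ[ξ k | ℱ k]) (ENNReal.ofReal P) μ ≤ ENNReal.ofReal (2 * B) := by
    intro k
    refine (eLpNorm_sub_le (hξL k).1 ((hξL k).condExp h1P).1 h1P).trans ?_
    rw [two_mul, ENNReal.ofReal_add hB.le hB.le]
    exact add_le_add (hξ k) ((eLpNorm_condExp_le_eLpNorm _ h1P).trans (hξ k))
  have key := H μ ℱ (fun k ω => c k * (ξ k ω - μ[ξ k | ℱ k] ω))
    (fun k => (c k ^ 2 + 1 / (n + 1)) * (2 * B) ^ 2)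
    (fun k => by positivity)
    (fun k => ((hξm k).sub (stronglyMeasurable_condExp.mono (ℱ.mono (Nat.le_succ k)))).const_mul _)
    hyL ?_ ?_ ((2 * B) ^ 2) (by positivity) n
  · rw [eLpNorm_le_ofReal_iff hP (by positivity) (memLp_finsetSum _ (fun k _ => hyL k))]
    refine key.trans ?_
    apply Real.rpow_le_rpow (Real.sqrt_nonneg _) _ (by linarith)
    have e : 2 * √(K * (2 + C)) * B = √(K * ((2 + C) * (2 * B) ^ 2)) := by
      rw [← mul_assoc K, Real.sqrt_mul (show 0 ≤ K * (2 + C) by positivity),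
        Real.sqrt_sq (by positivity)]
      ring
    rw [e]
    apply Real.sqrt_le_sqrt
    apply mul_le_mul_of_nonneg_left _ hK.le
    rw [← Finset.sum_mul, Finset.sum_add_distrib]
    have h3 : ∑ k ∈ Finset.range n, (1 : ℝ) / (n + 1) ≤ 1 := by
      rw [Finset.sum_const, Finset.card_range, nsmul_eq_mul, mul_one_div, div_le_one (by positivity)]
      linarith
    have : 0 < (2 * B) ^ 2 := by positivity
    nlinarith
  · intro k
    have hi : Integrable (ξ k) μ := (hξL k).integrable h1P
    have e : (fun ω => c k * (ξ k ω - μ[ξ k | ℱ k] ω)) = c k • (ξ k - μ[ξ k | ℱ k]) := by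
      ext ω; simp
    have h2 : μ[μ[ξ k | ℱ k] | ℱ k] = μ[ξ k | ℱ k] :=
      condExp_of_stronglyMeasurable (ℱ.le k) stronglyMeasurable_condExp integrable_condExp
    rw [e]
    filter_upwards [condExp_smul (μ := μ) (c k) (ξ k - μ[ξ k | ℱ k]) (ℱ k),
      condExp_sub hi (integrable_condExp (f := ξ k) (m := ℱ k)) (ℱ k)] with ω a1 a2
    rw [a1, Pi.smul_apply, a2, h2]
    simp
  · intro k
    have := (eLpNorm_le_ofReal_iff hP (by positivity) (hdL k)).1 (hd2 k)
    simp only [abs_mul]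
    simp_rw [Real.mul_rpow (abs_nonneg (c k)) (abs_nonneg _)]
    rw [integral_const_mul]
    have e : |c k| * (2 * B) ≤ √((c k ^ 2 + 1 / (n + 1)) * (2 * B) ^ 2) := by
      rw [Real.sqrt_mul (by positivity), Real.sqrt_sq (by positivity)]
      gcongr
      apply Real.abs_le_sqrt
      have : (0:ℝ) < 1 / (n + 1) := by positivity
      linarith
    calc |c k| ^ P * ∫ ω, |ξ k ω - μ[ξ k | ℱ k] ω| ^ P ∂μ ≤ |c k| ^ P * (2 * B) ^ P := by
          gcongr; exact this
      _ = (|c k| * (2 * B)) ^ P := (Real.mul_rpow (abs_nonneg _) (by positivity)).symm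
      _ ≤ _ := Real.rpow_le_rpow (by positivity) e (by linarith)

theorem mart_unifIntegrable {p C : ℝ} (hp : 2 ≤ p) (hC : 0 ≤ C) {Ω : Type} {m0 : MeasurableSpace Ω}
    (μ : Measure Ω) [IsProbabilityMeasure μ] (ℱ : Filtration ℕ m0) (ξ : ℕ → Ω → ℝ)
    (hξm : ∀ k, StronglyMeasurable[ℱ (k + 1)] (ξ k))
    (hξ : UniformIntegrable ξ (ENNReal.ofReal p) μ) (c : ℕ → ℕ → ℝ)
    (hc : ∀ n, ∑ k ∈ Finset.range n, c n k ^ 2 ≤ C) :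
    UniformIntegrable (fun n ω => ∑ k ∈ Finset.range n, c n k * (ξ k ω - μ[ξ k | ℱ k] ω))
      (ENNReal.ofReal p) μ := by
  have h1P : 1 ≤ ENNReal.ofReal p := by
    rw [← ENNReal.ofReal_one]; exact ENNReal.ofReal_le_ofReal (by linarith)
  have hTm : ∀ ζ : ℕ → Ω → ℝ, (∀ k, StronglyMeasurable[ℱ (k + 1)] (ζ k)) → ∀ n,
      AEStronglyMeasurable (fun ω => ∑ k ∈ Finset.range n, c n k * (ζ k ω - μ[ζ k | ℱ k] ω)) μ := by
    intro ζ hζ n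
    apply StronglyMeasurable.aestronglyMeasurable
    apply Finset.stronglyMeasurable_fun_sum
    intro k hk
    exact ((((hζ k).mono (ℱ.le _)).sub (stronglyMeasurable_condExp.mono (ℱ.le _))).const_mul _)
  obtain ⟨K, hK, HK⟩ := mart_norm_bound hp hC
  obtain ⟨K2, hK2, HK2⟩ := mart_norm_bound (P := 2 * p) (by linarith) hC
  refine ⟨hTm ξ hξm, ?_, ?_⟩
  · intro ε hε
    obtain ⟨M, hM⟩ := hξ.spec (by simp; linarith) (by simp) (ε := ε / (2 * K)) (by positivity)
    set ξ2 : ℕ → Ω → ℝ := fun k => {x | M ≤ ‖ξ k x‖₊}.indicator (ξ k) with hξ2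
    set ξ1 : ℕ → Ω → ℝ := fun k => {x | M ≤ ‖ξ k x‖₊}ᶜ.indicator (ξ k) with hξ1
    have hset : ∀ k, MeasurableSet[ℱ (k + 1)] {x | M ≤ ‖ξ k x‖₊} := fun k =>
      (hξm k).nnnorm.measurable (measurableSet_Ici (a := M))
    have hm2 : ∀ k, StronglyMeasurable[ℱ (k + 1)] (ξ2 k) := fun k => (hξm k).indicator (hset k)
    have hm1 : ∀ k, StronglyMeasurable[ℱ (k + 1)] (ξ1 k) := fun k =>
      (hξm k).indicator (hset k).compl
    have hb1 : ∀ k ω, ‖ξ1 k ω‖ ≤ (M : ℝ) + 1 := by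
      intro k ω
      simp only [hξ1, Set.indicator]
      split_ifs with h
      · have h' : ‖ξ k ω‖₊ < M := by simpa using h
        have : ‖ξ k ω‖ < M := by exact_mod_cast h'
        linarith
      · simp; positivity
    have hn1 : ∀ k, eLpNorm (ξ1 k) (ENNReal.ofReal (2 * p)) μ ≤ ENNReal.ofReal ((M : ℝ) + 1) := by
      intro k
      refine (eLpNorm_le_of_ae_bound (Eventually.of_forall (hb1 k))).trans ?_
      simp
    have hi : ∀ k, Integrable (ξ k) μ := fun k => (hξ.memLp k).integrable h1P
    have hi2 : ∀ k, Integrable (ξ2 k) μ := fun k => (hi k).indicator (ℱ.le _ _ (hset k))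
    have hi1 : ∀ k, Integrable (ξ1 k) μ := fun k => (hi k).indicator (ℱ.le _ _ (hset k)).compl
    have hadd : ∀ k, ξ k = ξ1 k + ξ2 k := fun k => (Set.indicator_compl_add_self _ _).symm
    have hsplit : ∀ n, (fun ω => ∑ k ∈ Finset.range n, c n k * (ξ k ω - μ[ξ k | ℱ k] ω)) =ᵐ[μ]
        (fun ω => ∑ k ∈ Finset.range n, c n k * (ξ1 k ω - μ[ξ1 k | ℱ k] ω)) +
        (fun ω => ∑ k ∈ Finset.range n, c n k * (ξ2 k ω - μ[ξ2 k | ℱ k] ω)) := by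
      intro n
      have : ∀ᵐ ω ∂μ, ∀ k, μ[ξ k | ℱ k] ω = μ[ξ1 k | ℱ k] ω + μ[ξ2 k | ℱ k] ω := by
        rw [ae_all_iff]
        intro k
        have h := condExp_add (hi1 k) (hi2 k) (ℱ k)
        rw [← hadd k] at h
        exact h
      filter_upwards [this] with ω hω
      rw [Pi.add_apply, ← Finset.sum_add_distrib]
      refine Finset.sum_congr rfl fun k _ => ?_
      rw [hω k, hadd k, Pi.add_apply]; ring
    set D := K2 * ((M : ℝ) + 1) with hD
    have hD0 : 0 < D := by positivity
    refine ⟨(ε / 2 / D) ^ (2 * p), by positivity, fun n s hs hμs => ?_⟩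
    rw [eLpNorm_congr_ae ((hsplit n).indicator (s := s)), Set.indicator_add']
    refine (eLpNorm_add_le ((hTm ξ1 hm1 n).indicator hs) ((hTm ξ2 hm2 n).indicator hs) h1P).trans ?_
    have e : ENNReal.ofReal ε = ENNReal.ofReal (ε / 2) + ENNReal.ofReal (ε / 2) := by
      rw [← ENNReal.ofReal_add (by positivity) (by positivity)]; congr 1; ring
    rw [e]
    refine add_le_add ?_ ?_
    · rw [eLpNorm_indicator_eq_eLpNorm_restrict hs]
      refine (eLpNorm_le_eLpNorm_mul_rpow_measure_univ (q := ENNReal.ofReal (2 * p))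
        (ENNReal.ofReal_le_ofReal (by linarith)) (hTm ξ1 hm1 n).restrict).trans ?_
      rw [ENNReal.toReal_ofReal (by linarith), ENNReal.toReal_ofReal (by linarith),
        Measure.restrict_apply_univ]
      have h1 := (eLpNorm_restrict_le _ _ _ s).trans (HK2 μ ℱ ξ1 _ (by positivity) hm1 hn1 (c n) n (hc n))
      calc _ ≤ ENNReal.ofReal D * (ENNReal.ofReal ((ε / 2 / D) ^ (2 * p))) ^ (1 / p - 1 / (2 * p)) := by
            refine mul_le_mul' h1 (ENNReal.rpow_le_rpow hμs ?_)
            rw [sub_nonneg]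
            apply one_div_le_one_div_of_le (by linarith) (by linarith)
        _ = ENNReal.ofReal (ε / 2) := by
            rw [ENNReal.ofReal_rpow_of_pos (by positivity), ← Real.rpow_mul (by positivity),
              ← ENNReal.ofReal_mul hD0.le]
            congr 1
            have : 2 * p * (1 / p - 1 / (2 * p)) = 1 := by
              have : p ≠ 0 := by linarith
              field_simp; ring
            rw [this, Real.rpow_one]
            field_simp
    · refine (eLpNorm_indicator_le _).trans ?_
      refine (HK μ ℱ ξ2 _ (by positivity) hm2 hM (c n) n (hc n)).trans (le_of_eq ?_)
      congr 1
      field_simp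
  · obtain ⟨B, hB⟩ := hξ.2.2
    refine ⟨Real.toNNReal (K * (B + 1)), fun n => ?_⟩
    refine HK μ ℱ ξ (B + 1) (by positivity) hξm (fun k => (hB k).trans ?_) (c n) n (hc n)
    rw [ENNReal.ofReal_add (by positivity) (by positivity)]
    simp

theorem ui_of_norm_le_sum {ι : Type*} [Fintype ι] {F : Type*} [NormedAddCommGroup F]
    {Ω : Type} {m0 : MeasurableSpace Ω} {μ : Measure Ω} {P : ENNReal} (hP : 1 ≤ P)
    {g : ι → ℕ → Ω → ℝ} (hg : ∀ i, UniformIntegrable (g i) P μ) {Z : ℕ → Ω → F}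
    (hZm : ∀ n, AEStronglyMeasurable (Z n) μ)
    (hZ : ∀ n, ∀ᵐ ω ∂μ, ‖Z n ω‖ ≤ ∑ i, |g i n ω|) : UniformIntegrable Z P μ := by
  have key : ∀ n s, MeasurableSet s →
      eLpNorm (s.indicator (Z n)) P μ ≤ ∑ i, eLpNorm (s.indicator (g i n)) P μ := by
    intro n s hs
    calc eLpNorm (s.indicator (Z n)) P μ
        ≤ eLpNorm (fun ω => ∑ i, ‖s.indicator (g i n) ω‖) P μ := by
          apply eLpNorm_mono_ae_real
          filter_upwards [hZ n] with ω hω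
          by_cases h : ω ∈ s
          · simpa [h] using hω
          · simp [h]
      _ ≤ ∑ i, eLpNorm (fun ω => ‖s.indicator (g i n) ω‖) P μ := by
          have := eLpNorm_sum_le (s := Finset.univ) (f := fun i ω => ‖s.indicator (g i n) ω‖)
            (μ := μ) (p := P) (fun i _ => (((hg i).1 n).indicator hs).norm) hP
          refine le_trans (le_of_eq ?_) this
          congr 1
          ext ω; simp
      _ = _ := by simp only [eLpNorm_norm]
  refine ⟨hZm, ?_, ?_⟩
  · intro ε hε
    have hε' : 0 < ε / (Fintype.card ι + 1) := by positivity
    have h : ∀ i, ∃ δ : ℝ, 0 < δ ∧ ∀ n s, MeasurableSet s → μ s ≤ ENNReal.ofReal δ →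
        eLpNorm (s.indicator (g i n)) P μ ≤ ENNReal.ofReal (ε / (Fintype.card ι + 1)) := fun i => by
      obtain ⟨δ, h1, h2⟩ := (hg i).2.1 hε'
      exact ⟨δ, h1, h2⟩
    choose δ hδ0 hδ using h
    have : ∀ᶠ d in nhdsWithin (0:ℝ) (Set.Ioi 0), 0 < d ∧ ∀ i, d ≤ δ i := by
      refine (eventually_mem_nhdsWithin).and (eventually_all.2 fun i => ?_)
      exact Filter.Eventually.filter_mono nhdsWithin_le_nhds (eventually_le_nhds (hδ0 i))
    obtain ⟨d, hd0, hd⟩ := this.exists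
    refine ⟨d, hd0, fun n s hs hμ => (key n s hs).trans ?_⟩
    calc ∑ i, eLpNorm (s.indicator (g i n)) P μ
        ≤ ∑ i : ι, ENNReal.ofReal (ε / (Fintype.card ι + 1)) :=
          Finset.sum_le_sum fun i _ => hδ i n s hs (hμ.trans (ENNReal.ofReal_le_ofReal (hd i)))
      _ ≤ ENNReal.ofReal ε := by
          rw [← ENNReal.ofReal_sum_of_nonneg (fun i _ => hε'.le)]
          apply ENNReal.ofReal_le_ofReal
          rw [Finset.sum_const, Finset.card_univ, nsmul_eq_mul, ← mul_div_assoc,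
            div_le_iff₀ (by positivity)]
          nlinarith
  · choose C hC using fun i => (hg i).2.2
    refine ⟨∑ i, C i, fun n => ?_⟩
    have := key n Set.univ MeasurableSet.univ
    simp only [Set.indicator_univ] at this
    refine this.trans ?_
    push_cast
    exact Finset.sum_le_sum fun i _ => hC i n

theorem ui_comp {F : Type*} [NormedAddCommGroup F] 
    {Ω : Type} {m0 : MeasurableSpace Ω} {μ : Measure Ω} [IsProbabilityMeasure μ] {p : ℝ}
    (hp : 2 ≤ p) {Z : ℕ → Ω → F} (hZ : UniformIntegrable Z (ENNReal.ofReal p) μ)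
    {f : F → ℝ} (hf : Continuous f) (hfb : ∀ x, |f x| ≤ 1 + ‖x‖ ^ p) :
    UniformIntegrable (fun n ω => f (Z n ω)) 1 μ := by
  have hp0 : 0 < p := by linarith
  have key : ∀ n s, MeasurableSet s → eLpNorm (s.indicator (fun ω => f (Z n ω))) 1 μ ≤
      μ s + eLpNorm (s.indicator (Z n)) (ENNReal.ofReal p) μ ^ p := by
    intro n s hs
    rw [eLpNorm_indicator_eq_eLpNorm_restrict hs, eLpNorm_indicator_eq_eLpNorm_restrict hs,
      eLpNorm_one_eq_lintegral_enorm,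
      eLpNorm_eq_lintegral_rpow_enorm_toReal (by simp; linarith) (by simp),
      ENNReal.toReal_ofReal hp0.le, ← ENNReal.rpow_mul, one_div, inv_mul_cancel₀ hp0.ne',
      ENNReal.rpow_one]
    have e : μ s = ∫⁻ ω in s, 1 ∂μ := by simp
    rw [e, ← lintegral_add_left measurable_const]
    apply lintegral_mono
    intro ω
    dsimp only
    rw [← ofReal_norm, ← ofReal_norm, ENNReal.ofReal_rpow_of_nonneg (norm_nonneg _) hp0.le,
      ← ENNReal.ofReal_one, ← ENNReal.ofReal_add (by norm_num) (by positivity)]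
    exact ENNReal.ofReal_le_ofReal (hfb _)
  refine ⟨fun n => hf.comp_aestronglyMeasurable (hZ.1 n), ?_, ?_⟩
  · intro ε hε
    obtain ⟨δ, hδ0, hδ⟩ := hZ.2.1 (ε := (ε / 2) ^ (1 / p)) (by positivity)
    refine ⟨min δ (ε / 2), by positivity, fun n s hs hμ => (key n s hs).trans ?_⟩
    have h1 := hδ n s hs (hμ.trans (ENNReal.ofReal_le_ofReal (min_le_left _ _)))
    have h2 := hμ.trans (ENNReal.ofReal_le_ofReal (min_le_right _ _))
    have e : ENNReal.ofReal ε = ENNReal.ofReal (ε / 2) + ENNReal.ofReal (ε / 2) := by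
      rw [← ENNReal.ofReal_add (by positivity) (by positivity)]; congr 1; ring
    rw [e]
    refine add_le_add h2 ((ENNReal.rpow_le_rpow h1 hp0.le).trans (le_of_eq ?_))
    rw [ENNReal.ofReal_rpow_of_pos (by positivity), ← Real.rpow_mul (by positivity), one_div,
      inv_mul_cancel₀ hp0.ne', Real.rpow_one]
  · obtain ⟨C, hC⟩ := hZ.2.2
    refine ⟨1 + C ^ p, fun n => ?_⟩
    have := key n Set.univ MeasurableSet.univ
    simp only [Set.indicator_univ, measure_univ] at this
    refine this.trans ?_
    push_cast
    rw [ENNReal.coe_rpow_of_nonneg _ hp0.le]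
    gcongr
    exact hC n

theorem clamp_diff {M x : ℝ} {C : NNReal} (hM : (C : ℝ) ≤ M) :
    |x - max (-M) (min M x)| ≤ |if C ≤ ‖x‖₊ then x else 0| := by
  have hM0 : 0 ≤ M := C.2.trans hM
  split_ifs with h
  · rcases le_total M x with h1 | h1
    · rw [min_eq_left h1, max_eq_right (by linarith), abs_of_nonneg (by linarith),
        abs_of_nonneg (by linarith)]
      linarith
    · rw [min_eq_right h1]
      rcases le_total (-M) x with h2 | h2
      · rw [max_eq_right h2]; simp
      · rw [max_eq_left h2, abs_of_nonpos (by linarith), abs_of_nonpos (by linarith)]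
        linarith
  · have h' : ‖x‖₊ < C := not_le.1 h
    have : |x| < C := by exact_mod_cast h'
    obtain ⟨h1, h2⟩ := abs_lt.1 this
    rw [min_eq_right (by linarith), max_eq_right (by linarith)]
    simp

theorem clamp_integral {Ω : Type*} {m0 : MeasurableSpace Ω} {μ : Measure Ω}
    [IsProbabilityMeasure μ] {g : Ω → ℝ} (hg : Integrable g μ) {C : NNReal} {ε M : ℝ} (hε : 0 < ε)
    (h : eLpNorm ({x | C ≤ ‖g x‖₊}.indicator g) 1 μ ≤ ENNReal.ofReal ε) (hM : (C : ℝ) ≤ M) :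
    |∫ ω, g ω ∂μ - ∫ ω, max (-M) (min M (g ω)) ∂μ| ≤ ε := by
  have hM0 : 0 ≤ M := C.2.trans hM
  have hm : AEStronglyMeasurable (fun ω => max (-M) (min M (g ω))) μ := by
    have : Continuous (fun x : ℝ => max (-M) (min M x)) := by fun_prop
    exact this.comp_aestronglyMeasurable hg.1
  have hi : Integrable (fun ω => max (-M) (min M (g ω))) μ := by
    refine Integrable.of_bound hm M (Eventually.of_forall fun ω => ?_)
    rw [Real.norm_eq_abs, abs_le]
    exact ⟨le_max_left _ _, max_le (by linarith) (min_le_left _ _)⟩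
  rw [← integral_sub hg hi]
  have h1 : ENNReal.ofReal ‖∫ ω, (g ω - max (-M) (min M (g ω))) ∂μ‖ ≤ ENNReal.ofReal ε := by
    rw [ofReal_norm]
    refine (enorm_integral_le_lintegral_enorm _).trans ?_
    refine le_trans ?_ h
    rw [eLpNorm_one_eq_lintegral_enorm]
    apply lintegral_mono
    intro ω
    dsimp only
    rw [← ofReal_norm, ← ofReal_norm]
    apply ENNReal.ofReal_le_ofReal
    refine (clamp_diff hM).trans (le_of_eq ?_)
    by_cases hc : C ≤ ‖g ω‖₊ <;> simp [Set.indicator, hc]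
  exact (ENNReal.ofReal_le_ofReal_iff hε.le).1 h1

theorem tendsto_of_weak_ui {F : Type*} [NormedAddCommGroup F] [MeasurableSpace F] [BorelSpace F]
    [SecondCountableTopology F]
    {Ω : Type} {m0 : MeasurableSpace Ω} {μ : Measure Ω} [IsProbabilityMeasure μ] {p : ℝ}
    (hp : 2 ≤ p) {Z : ℕ → Ω → F} (hZ : UniformIntegrable Z (ENNReal.ofReal p) μ)
    (ν : Measure F) [IsProbabilityMeasure ν]
    (hw : ∀ f : BoundedContinuousFunction F ℝ,
      Tendsto (fun n => ∫ ω, f (Z n ω) ∂μ) atTop (nhds (∫ x, f x ∂ν)))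
    {f : F → ℝ} (hf : Continuous f) (hfb : ∀ x, |f x| ≤ 1 + ‖x‖ ^ p)
    (hν : Integrable (fun x => ‖x‖ ^ p) ν) :
    Tendsto (fun n => ∫ ω, f (Z n ω) ∂μ) atTop (nhds (∫ x, f x ∂ν)) := by
  have hUI := ui_comp hp hZ hf hfb
  have hfi : Integrable f ν :=
    ((integrable_const 1).add hν).mono' hf.aestronglyMeasurable (Eventually.of_forall hfb)
  have hUIν : UniformIntegrable (fun _ : ℕ => f) 1 ν :=
    uniformIntegrable_const le_rfl (by simp) (memLp_one_iff_integrable.2 hfi)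
  rw [Metric.tendsto_atTop]
  intro ε hε
  obtain ⟨C1, hC1⟩ := hUI.spec (by simp) (by simp) (ε := ε / 4) (by positivity)
  obtain ⟨C2, hC2⟩ := hUIν.spec (by simp) (by simp) (ε := ε / 4) (by positivity)
  set M : ℝ := C1 + C2 with hM
  have hM0 : 0 ≤ M := by positivity
  let fM : BoundedContinuousFunction F ℝ := BoundedContinuousFunction.ofNormedAddCommGroup
    (fun x => max (-M) (min M (f x))) (by fun_prop) M (fun x => by
      rw [Real.norm_eq_abs, abs_le]
      exact ⟨le_max_left _ _, max_le (by linarith) (min_le_left _ _)⟩)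
  obtain ⟨N, hN⟩ := (Metric.tendsto_atTop.1 (hw fM)) (ε / 4) (by positivity)
  refine ⟨N, fun n hn => ?_⟩
  have a1 := clamp_integral (memLp_one_iff_integrable.1 (hUI.memLp n)) (by positivity) (hC1 n)
    (M := M) (by simp [hM])
  have a2 := clamp_integral hfi (by positivity) (hC2 0) (M := M) (by simp [hM])
  have a3 := hN n hn
  rw [Real.dist_eq] at a3 ⊢
  have e : ∀ x, fM x = max (-M) (min M (f x)) := fun x => rfl
  simp only [e] at a3
  rw [abs_lt] at a3 ⊢
  rw [abs_le] at a1 a2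
  constructor <;> linarith [a1.1, a1.2, a2.1, a2.2, a3.1, a3.2]

theorem gauss_norm_integrable {q : ℕ} {p : ℝ} (hp : 2 ≤ p)
    (Sig : Matrix (Fin q) (Fin q) ℝ) (νlim : Measure (EuclideanSpace ℝ (Fin q)))
    (hGauss : ∀ l : Fin q → ℝ,
      Measure.map (fun x : EuclideanSpace ℝ (Fin q) => ∑ j, l j * x j) νlim =
        ProbabilityTheory.gaussianReal 0 (Real.toNNReal (∑ i, ∑ j, l i * Sig i j * l j))) :
    Integrable (fun x => ‖x‖ ^ p) νlim := by
  have hj : ∀ j, MemLp (fun x : EuclideanSpace ℝ (Fin q) => x j) (ENNReal.ofReal p) νlim := by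
    intro j
    have h := hGauss (Pi.single j 1)
    have e : (fun x : EuclideanSpace ℝ (Fin q) => ∑ i, (Pi.single j 1 : Fin q → ℝ) i * x i) =
        fun x => x j := by
      ext x
      simp [Pi.single_apply]
    rw [e] at h
    have h2 := ProbabilityTheory.memLp_id_gaussianReal' (μ := 0) (v := (∑ i, ∑ k,
      (Pi.single j 1 : Fin q → ℝ) i * Sig i k * (Pi.single j 1 : Fin q → ℝ) k).toNNReal)
      (ENNReal.ofReal p) (by simp)
    rw [← h] at h2
    exact (memLp_map_measure_iff (by fun_prop) (by fun_prop)).1 h2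
  have hZ : MemLp (fun x : EuclideanSpace ℝ (Fin q) => x) (ENNReal.ofReal p) νlim := by
    have hs : MemLp (fun x : EuclideanSpace ℝ (Fin q) => ∑ j, ‖x j‖) (ENNReal.ofReal p) νlim :=
      memLp_finsetSum _ (fun j _ => (hj j).norm)
    refine hs.mono (by fun_prop) (Eventually.of_forall fun x => ?_)
    rw [Real.norm_of_nonneg (Finset.sum_nonneg fun _ _ => norm_nonneg _)]
    rw [EuclideanSpace.norm_eq]
    apply Real.sqrt_le_iff.2 ⟨Finset.sum_nonneg fun _ _ => norm_nonneg _, ?_⟩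
    exact Finset.sum_sq_le_sq_sum_of_nonneg fun _ _ => norm_nonneg _
  have := hZ.integrable_norm_rpow (by simp; linarith) (by simp)
  rwa [ENNReal.toReal_ofReal (by linarith)] at this

theorem rpow_le_one_add {r p t : ℝ} (hr : 0 ≤ r) (hrp : r ≤ p) (ht : 0 ≤ t) :
    t ^ r ≤ 1 + t ^ p := by
  have h0 : 0 ≤ t ^ p := by positivity
  rcases le_total t 1 with h | h
  · have := Real.rpow_le_one ht h hr
    linarith
  · have := Real.rpow_le_rpow_of_exponent_le h hrp
    linarith

/-- Moment convergence from weak convergence and uniform integrability. -/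
theorem moments_of_ui {q : ℕ} {Ω : Type} {m0 : MeasurableSpace Ω} {μ : Measure Ω}
    [IsProbabilityMeasure μ] {p : ℝ} (hp : 2 ≤ p)
    (Sig : Matrix (Fin q) (Fin q) ℝ) (νlim : Measure (EuclideanSpace ℝ (Fin q)))
    (hνlim : IsProbabilityMeasure νlim)
    (hGauss : ∀ l : Fin q → ℝ,
      Measure.map (fun x : EuclideanSpace ℝ (Fin q) => ∑ j, l j * x j) νlim =
        ProbabilityTheory.gaussianReal 0 (Real.toNNReal (∑ i, ∑ j, l i * Sig i j * l j)))
    {Z : ℕ → Ω → EuclideanSpace ℝ (Fin q)} (hZ : UniformIntegrable Z (ENNReal.ofReal p) μ)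
    (hw : ∀ f : BoundedContinuousFunction (EuclideanSpace ℝ (Fin q)) ℝ,
      Tendsto (fun n => ∫ ω, f (Z n ω) ∂μ) atTop (nhds (∫ x, f x ∂νlim))) :
    (∀ r : ℝ, 1 ≤ r → r ≤ p →
        Tendsto (fun n : ℕ => ∫ ω, ‖Z n ω‖ ^ r ∂μ) atTop (nhds (∫ x, ‖x‖ ^ r ∂νlim))) ∧
      (∀ α : Fin q → ℕ, (∑ j, (α j : ℝ)) ≤ p →
        Tendsto (fun n : ℕ => ∫ ω, ∏ j, Z n ω j ^ α j ∂μ)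
          atTop (nhds (∫ x : EuclideanSpace ℝ (Fin q), ∏ j, x j ^ α j ∂νlim))) := by
  have hν := gauss_norm_integrable hp Sig νlim hGauss
  constructor
  · intro r hr hrp
    refine tendsto_of_weak_ui hp hZ νlim hw (f := fun x => ‖x‖ ^ r) ?_ ?_ hν
    · exact continuous_norm.rpow_const (fun x => Or.inr (by linarith))
    · intro x
      rw [abs_of_nonneg (by positivity)]
      exact rpow_le_one_add (by linarith) hrp (norm_nonneg _)
  · intro α hα
    refine tendsto_of_weak_ui hp hZ νlim hw (f := fun x => ∏ j, x j ^ α j) ?_ ?_ hν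
    · fun_prop
    · intro x
      rw [Finset.abs_prod]
      calc ∏ j, |x j ^ α j| ≤ ∏ j, ‖x‖ ^ α j := by
            apply Finset.prod_le_prod (fun _ _ => abs_nonneg _)
            intro j _
            rw [abs_pow]
            gcongr
            exact PiLp.norm_apply_le x j
        _ = ‖x‖ ^ (∑ j, (α j : ℝ)) := by
            rw [Finset.prod_pow_eq_pow_sum, ← Nat.cast_sum, Real.rpow_natCast]
        _ ≤ _ := rpow_le_one_add (Finset.sum_nonneg fun _ _ => by positivity) hα (norm_nonneg _)

/-- Products of the operators `1 + w_j⁻¹ T`, `k ≤ j < n`. -/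
noncomputable def urnPhi {E : Type*} [AddCommGroup E] [Module ℂ E] (T : Module.End ℂ E) (w : ℕ → ℝ)
    (k : ℕ) : ℕ → Module.End ℂ E
  | 0 => 1
  | n + 1 => if k ≤ n then (1 + (((w n)⁻¹ : ℝ) : ℂ) • T) * urnPhi T w k n else 1

theorem urnPhi_self {E : Type*} [AddCommGroup E] [Module ℂ E] (T : Module.End ℂ E) (w : ℕ → ℝ)
    (k : ℕ) : urnPhi T w k k = 1 := by
  cases k with
  | zero => rfl
  | succ k => simp [urnPhi]

theorem urnPhi_succ {E : Type*} [AddCommGroup E] [Module ℂ E] (T : Module.End ℂ E) (w : ℕ → ℝ)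
    {k n : ℕ} (h : k ≤ n) :
    urnPhi T w k (n + 1) = (1 + (((w n)⁻¹ : ℝ) : ℂ) • T) * urnPhi T w k n := by
  simp [urnPhi, h]

theorem urnPhi_comm {E : Type*} [AddCommGroup E] [Module ℂ E] (T : Module.End ℂ E) (w : ℕ → ℝ)
    (k n : ℕ) : Commute T (urnPhi T w k n) := by
  induction n with
  | zero => exact Commute.one_right T
  | succ n ih =>
    unfold urnPhi
    split_ifs
    · exact ((Commute.one_right T).add_right ((Commute.refl T).smul_right _)).mul_right ih
    · exact Commute.one_right T

/-- Partial sums of `1 / w_j`. -/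
noncomputable def urnH (w : ℕ → ℝ) (n : ℕ) : ℝ := ∑ j ∈ Finset.range n, (w j)⁻¹

/-- Partial sums of `1 / w_j ^ 2`. -/
noncomputable def urnS (w : ℕ → ℝ) (n : ℕ) : ℝ := ∑ j ∈ Finset.range n, ((w j)⁻¹) ^ 2

theorem urnH_succ (w : ℕ → ℝ) (n : ℕ) : urnH w (n + 1) = urnH w n + (w n)⁻¹ :=
  Finset.sum_range_succ _ _

theorem urnS_succ (w : ℕ → ℝ) (n : ℕ) : urnS w (n + 1) = urnS w n + ((w n)⁻¹) ^ 2 :=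
  Finset.sum_range_succ _ _

theorem urnH_mono {w : ℕ → ℝ} (hw : ∀ n, 0 < w n) : Monotone (urnH w) :=
  monotone_nat_of_le_succ fun n => by
    rw [urnH_succ]; have := inv_pos.2 (hw n); linarith

theorem urnS_mono {w : ℕ → ℝ} : Monotone (urnS w) :=
  monotone_nat_of_le_succ fun n => by
    rw [urnS_succ]; have := sq_nonneg ((w n)⁻¹); linarith

theorem urnS_bdd {w₀ b : ℝ} (hw₀ : 0 < w₀) (hb : 0 < b) (n : ℕ) :
    urnS (fun n => w₀ + n * b) n ≤ (w₀⁻¹) ^ 2 + w₀⁻¹ * b⁻¹ := by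
  have key : ∀ n, urnS (fun n => w₀ + n * b) (n + 1) ≤
      (w₀⁻¹) ^ 2 + w₀⁻¹ * b⁻¹ - (w₀ + n * b)⁻¹ * b⁻¹ := by
    intro n
    induction n with
    | zero => simp [urnS]
    | succ n ih =>
      rw [urnS_succ]
      have h1 : 0 < w₀ + n * b := by positivity
      have h2 : ((w₀ + ((n + 1 : ℕ) : ℝ) * b)⁻¹) ^ 2 ≤
          (w₀ + n * b)⁻¹ * b⁻¹ - (w₀ + ((n + 1 : ℕ) : ℝ) * b)⁻¹ * b⁻¹ := by
        push_cast
        have e : (w₀ + n * b)⁻¹ * b⁻¹ - (w₀ + ((n + 1 : ℝ)) * b)⁻¹ * b⁻¹ =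
            (w₀ + n * b)⁻¹ * (w₀ + (n + 1 : ℝ) * b)⁻¹ := by
          have : w₀ + (n + 1 : ℝ) * b ≠ 0 := by positivity
          field_simp
          ring
        rw [e, sq]
        gcongr
        linarith
      linarith
  cases n with
  | zero => simp [urnS]; positivity
  | succ n =>
    have := key n
    have h1 : 0 ≤ (w₀ + n * b)⁻¹ * b⁻¹ := by positivity
    linarith

theorem norm_one_add_le (lam : ℂ) (x : ℝ) :
    ‖1 + (x : ℂ) * lam‖ ≤ Real.exp (lam.re * x + ‖lam‖ ^ 2 / 2 * x ^ 2) := by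
  apply le_of_sq_le_sq _ (Real.exp_pos _).le
  rw [← Complex.normSq_eq_norm_sq, ← Real.exp_nat_mul]
  have e : Complex.normSq (1 + (x : ℂ) * lam) = (2 * lam.re * x + ‖lam‖ ^ 2 * x ^ 2) + 1 := by
    rw [← Complex.normSq_eq_norm_sq, Complex.normSq_apply, Complex.normSq_apply]
    simp
    ring
  rw [e]
  refine (Real.add_one_le_exp _).trans (le_of_eq ?_)
  congr 1
  push_cast
  ring

theorem growth_step {E : Type*} [NormedAddCommGroup E] [NormedSpace ℂ E] (T : Module.End ℂ E)
    {w : ℕ → ℝ} {w₀ : ℝ} (hw₀ : 0 < w₀) (hw : ∀ n, w₀ ≤ w n) (lam : ℂ) (v : E) (m : ℕ) {C : ℝ}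
    (hC : 0 ≤ C)
    (h : ∀ k n, k ≤ n → ‖urnPhi T w k n ((T - lam • 1) v)‖ ≤
      Real.exp (lam.re * (urnH w n - urnH w k) + ‖lam‖ ^ 2 / 2 * (urnS w n - urnS w k)) *
        (C * (1 + (urnH w n - urnH w k)) ^ m)) :
    ∀ k n, k ≤ n → ‖urnPhi T w k n v‖ ≤
      Real.exp (lam.re * (urnH w n - urnH w k) + ‖lam‖ ^ 2 / 2 * (urnS w n - urnS w k)) *
        (‖v‖ + C * Real.exp (|lam.re| / w₀) * (urnH w n - urnH w k) *
          (1 + (urnH w n - urnH w k)) ^ m) := by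
  intro k n hkn
  have hwp : ∀ n, 0 < w n := fun n => hw₀.trans_le (hw n)
  induction n, hkn using Nat.le_induction with
  | base => simp [urnPhi_self]
  | succ n hkn ih =>
    have hh : 0 ≤ urnH w n - urnH w k := sub_nonneg.2 (urnH_mono hwp hkn)
    have h' := h k n hkn
    have hx : 0 < (w n)⁻¹ := inv_pos.2 (hwp n)
    have hxle : (w n)⁻¹ ≤ w₀⁻¹ := inv_anti₀ hw₀ (hw n)
    have e0 : urnPhi T w k (n + 1) v = (1 + (((w n)⁻¹ : ℝ) : ℂ) * lam) • urnPhi T w k n v +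
        (((w n)⁻¹ : ℝ) : ℂ) • urnPhi T w k n ((T - lam • 1) v) := by
      have hc : T (urnPhi T w k n v) = urnPhi T w k n (T v) :=
        congrArg (fun f : Module.End ℂ E => f v) (urnPhi_comm T w k n).eq
      rw [urnPhi_succ T w hkn]
      simp only [Module.End.mul_apply, LinearMap.add_apply, Module.End.one_apply,
        LinearMap.smul_apply, LinearMap.sub_apply, map_sub, map_smul, hc]
      module
    set x := (w n)⁻¹ with hxdef
    set H := urnH w n - urnH w k with hH
    have eH : urnH w (n + 1) - urnH w k = H + x := by rw [urnH_succ]; ring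
    have eS : urnS w (n + 1) - urnS w k = (urnS w n - urnS w k) + x ^ 2 := by
      rw [urnS_succ]; ring
    set S := urnS w n - urnS w k with hS
    rw [eH, eS]
    have eexp : Real.exp (lam.re * (H + x) + ‖lam‖ ^ 2 / 2 * (S + x ^ 2)) =
        Real.exp (lam.re * x + ‖lam‖ ^ 2 / 2 * x ^ 2) *
          Real.exp (lam.re * H + ‖lam‖ ^ 2 / 2 * S) := by
      rw [← Real.exp_add]; congr 1; ring
    rw [eexp, e0]
    set G := Real.exp (lam.re * H + ‖lam‖ ^ 2 / 2 * S) with hG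
    have hg := norm_one_add_le lam x
    set g := Real.exp (lam.re * x + ‖lam‖ ^ 2 / 2 * x ^ 2) with hgdef
    set K := Real.exp (|lam.re| / w₀) with hK
    have hgK : 1 ≤ g * K := by
      rw [hgdef, hK, ← Real.exp_add]
      apply Real.one_le_exp
      have h1 : -(|lam.re| / w₀) ≤ lam.re * x := by
        have : |lam.re * x| ≤ |lam.re| / w₀ := by
          rw [abs_mul, abs_of_pos hx, div_eq_mul_inv]
          gcongr
        exact (abs_le.1 this).1
      have h2 : 0 ≤ ‖lam‖ ^ 2 / 2 * x ^ 2 := by positivity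
      linarith
    have hGp : 0 < G := Real.exp_pos _
    have hgp : 0 < g := Real.exp_pos _
    have hKp : 0 < K := Real.exp_pos _
    calc ‖(1 + (x : ℂ) * lam) • urnPhi T w k n v + (x : ℂ) • urnPhi T w k n ((T - lam • 1) v)‖
        ≤ ‖1 + (x : ℂ) * lam‖ * ‖urnPhi T w k n v‖ +
          x * ‖urnPhi T w k n ((T - lam • 1) v)‖ := by
          refine (norm_add_le _ _).trans ?_
          rw [norm_smul, norm_smul, Complex.norm_real, Real.norm_of_nonneg hx.le]
      _ ≤ g * (G * (‖v‖ + C * K * H * (1 + H) ^ m)) + x * (G * (C * (1 + H) ^ m)) := by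
          gcongr
      _ ≤ g * (G * (‖v‖ + C * K * H * (1 + H) ^ m)) + (g * K) * (x * (G * (C * (1 + H) ^ m))) := by
          have : 0 ≤ x * (G * (C * (1 + H) ^ m)) := by positivity
          nlinarith
      _ = g * G * (‖v‖ + C * K * (H + x) * (1 + H) ^ m) := by ring
      _ ≤ g * G * (‖v‖ + C * K * (H + x) * (1 + (H + x)) ^ m) := by
          gcongr
          linarith

theorem growth_aux {E : Type*} [NormedAddCommGroup E] [NormedSpace ℂ E] (T : Module.End ℂ E)
    {w : ℕ → ℝ} {w₀ : ℝ} (hw₀ : 0 < w₀) (hw : ∀ n, w₀ ≤ w n) (lam : ℂ) (m : ℕ) :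
    ∀ v : E, ((T - lam • 1) ^ (m + 1)) v = 0 → ∃ C : ℝ, 0 ≤ C ∧
    ∀ k n, k ≤ n → ‖urnPhi T w k n v‖ ≤
      Real.exp (lam.re * (urnH w n - urnH w k) + ‖lam‖ ^ 2 / 2 * (urnS w n - urnS w k)) *
        (C * (1 + (urnH w n - urnH w k)) ^ m) := by
  have hwp : ∀ n, 0 < w n := fun n => hw₀.trans_le (hw n)
  induction m with
  | zero =>
    intro v hv
    refine ⟨‖v‖, norm_nonneg _, ?_⟩
    have := growth_step T hw₀ hw lam v 0 (C := 0) le_rfl (by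
      intro k n _
      have : (T - lam • 1) v = 0 := by simpa using hv
      rw [this]; simp)
    simpa using this
  | succ m ih =>
    intro v hv
    obtain ⟨C, hC, h⟩ := ih ((T - lam • 1) v) (by
      rw [← Module.End.mul_apply, ← pow_succ]; exact hv)
    refine ⟨‖v‖ + C * Real.exp (|lam.re| / w₀), by positivity, fun k n hkn => ?_⟩
    refine (growth_step T hw₀ hw lam v m hC h k n hkn).trans ?_
    have hh : 0 ≤ urnH w n - urnH w k := sub_nonneg.2 (urnH_mono hwp hkn)
    set H := urnH w n - urnH w k with hH
    apply mul_le_mul_of_nonneg_left _ (Real.exp_pos _).le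
    have h1 : 1 ≤ (1 + H) ^ (m + 1) := one_le_pow₀ (by linarith)
    have h2 : H * (1 + H) ^ m ≤ (1 + H) ^ (m + 1) := by
      rw [pow_succ']; gcongr; linarith
    have h3 : 0 ≤ C * Real.exp (|lam.re| / w₀) := by positivity
    nlinarith [norm_nonneg v, mul_le_mul_of_nonneg_left h2 h3,
      mul_le_mul_of_nonneg_left h1 (norm_nonneg v)]

theorem growth {E : Type*} [NormedAddCommGroup E] [NormedSpace ℂ E] (T : Module.End ℂ E)
    {w₀ b : ℝ} (hw₀ : 0 < w₀) (hb : 0 < b) (lam : ℂ) (m : ℕ) (v : E)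
    (hv : ((T - lam • 1) ^ (m + 1)) v = 0) : ∃ C : ℝ, 0 ≤ C ∧
    ∀ k n, k ≤ n → ‖urnPhi T (fun n : ℕ => w₀ + n * b) k n v‖ ≤
      C * (Real.exp (lam.re * (urnH (fun n : ℕ => w₀ + n * b) n - urnH (fun n => w₀ + n * b) k)) *
        (1 + (urnH (fun n : ℕ => w₀ + n * b) n - urnH (fun n => w₀ + n * b) k)) ^ m) := by
  have hw : ∀ n : ℕ, w₀ ≤ w₀ + n * b := fun n => by
    have : 0 ≤ n * b := by positivity
    linarith
  have hwp : ∀ n : ℕ, 0 < w₀ + n * b := fun n => hw₀.trans_le (hw n)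
  obtain ⟨C, hC, h⟩ := growth_aux T (w := fun n : ℕ => w₀ + n * b) hw₀ hw lam m v hv
  refine ⟨C * Real.exp (‖lam‖ ^ 2 / 2 * ((w₀⁻¹) ^ 2 + w₀⁻¹ * b⁻¹)), by positivity,
    fun k n hkn => (h k n hkn).trans ?_⟩
  have hh := sub_nonneg.2 (urnH_mono hwp hkn)
  have hS : urnS (fun n : ℕ => w₀ + n * b) n - urnS (fun n => w₀ + n * b) k ≤
      (w₀⁻¹) ^ 2 + w₀⁻¹ * b⁻¹ := by
    have h1 := urnS_bdd hw₀ hb n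
    have h2 : 0 ≤ urnS (fun n : ℕ => w₀ + n * b) k := Finset.sum_nonneg fun _ _ => sq_nonneg _
    linarith
  rw [Real.exp_add]
  calc _ ≤ (Real.exp (lam.re * (urnH (fun n : ℕ => w₀ + n * b) n - urnH (fun n => w₀ + n * b) k)) *
        Real.exp (‖lam‖ ^ 2 / 2 * ((w₀⁻¹) ^ 2 + w₀⁻¹ * b⁻¹))) *
        (C * (1 + (urnH (fun n : ℕ => w₀ + n * b) n - urnH (fun n => w₀ + n * b) k)) ^ m) := by
        gcongr
    _ = _ := by ring

theorem exp_le_sq {x : ℝ} (hx : 0 ≤ x) : Real.exp x ≤ (1 + x) * Real.exp (x ^ 2) := by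
  have h1 := Real.one_sub_inv_le_log_of_pos (x := 1 + x) (by linarith)
  have h2 : x - x ^ 2 ≤ 1 - (1 + x)⁻¹ := by
    have : 1 - (1 + x)⁻¹ = x / (1 + x) := by field_simp; ring
    rw [this, le_div_iff₀ (by linarith)]
    nlinarith [pow_nonneg hx 3]
  calc Real.exp x ≤ Real.exp (Real.log (1 + x) + x ^ 2) := by
        apply Real.exp_le_exp.2; linarith
    _ = _ := by rw [Real.exp_add, Real.exp_log (by linarith)]

theorem exp_H_le {w₀ b : ℝ} (hw₀ : 0 < w₀) (hb : 0 < b) : ∃ C : ℝ, 0 < C ∧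
    ∀ k n, k ≤ n → Real.exp (b * (urnH (fun n : ℕ => w₀ + n * b) n - urnH (fun n => w₀ + n * b) k))
      ≤ C * ((w₀ + n * b) * (w₀ + k * b)⁻¹) := by
  have hwp : ∀ n : ℕ, 0 < w₀ + n * b := fun n => by positivity
  refine ⟨Real.exp (b ^ 2 * ((w₀⁻¹) ^ 2 + w₀⁻¹ * b⁻¹)), Real.exp_pos _, fun k n hkn => ?_⟩
  have key : Real.exp (b * (urnH (fun n : ℕ => w₀ + n * b) n - urnH (fun n => w₀ + n * b) k)) ≤
      Real.exp (b ^ 2 * (urnS (fun n : ℕ => w₀ + n * b) n - urnS (fun n => w₀ + n * b) k)) *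
        ((w₀ + n * b) * (w₀ + k * b)⁻¹) := by
    induction n, hkn using Nat.le_induction with
    | base => simp [(hwp k).ne']
    | succ n hkn ih =>
      have h0 := exp_le_sq (x := b * (w₀ + n * b)⁻¹) (by have := hwp n; positivity)
      rw [urnH_succ, urnS_succ]
      have e1 : b * (urnH (fun n : ℕ => w₀ + n * b) n + (w₀ + n * b)⁻¹ -
          urnH (fun n => w₀ + n * b) k) = b * (urnH (fun n : ℕ => w₀ + n * b) n -
          urnH (fun n => w₀ + n * b) k) + b * (w₀ + n * b)⁻¹ := by ring
      have e2 : b ^ 2 * (urnS (fun n : ℕ => w₀ + n * b) n + ((w₀ + n * b)⁻¹) ^ 2 -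
          urnS (fun n => w₀ + n * b) k) = b ^ 2 * (urnS (fun n : ℕ => w₀ + n * b) n -
          urnS (fun n => w₀ + n * b) k) + (b * (w₀ + n * b)⁻¹) ^ 2 := by ring
      rw [e1, e2, Real.exp_add, Real.exp_add]
      have h1 := hwp n
      calc _ ≤ _ := mul_le_mul ih h0 (Real.exp_pos _).le (by have := hwp k; positivity)
        _ = _ := by
          have h2 := (hwp k).ne'
          push_cast
          field_simp
          ring
  refine key.trans ?_
  have hS : urnS (fun n : ℕ => w₀ + n * b) n - urnS (fun n => w₀ + n * b) k ≤
      (w₀⁻¹) ^ 2 + w₀⁻¹ * b⁻¹ := by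
    have h1 := urnS_bdd hw₀ hb n
    have h2 : 0 ≤ urnS (fun n : ℕ => w₀ + n * b) k := Finset.sum_nonneg fun _ _ => sq_nonneg _
    linarith
  have h1 := hwp n
  have h2 := hwp k
  gcongr

theorem one_add_pow_le_exp {δ : ℝ} (hδ : 0 < δ) (N : ℕ) : ∃ C : ℝ, 0 < C ∧
    ∀ h : ℝ, 0 ≤ h → (1 + h) ^ N ≤ C * Real.exp (δ * h) := by
  have hd : 0 < δ / (N + 1) := by positivity
  refine ⟨(1 + (δ / (N + 1))⁻¹) ^ N, by positivity, fun h hh => ?_⟩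
  have h1 : 1 + h ≤ (1 + (δ / (N + 1))⁻¹) * Real.exp (δ / (N + 1) * h) := by
    have h2 := Real.add_one_le_exp (δ / (N + 1) * h)
    calc 1 + h ≤ (1 + (δ / (N + 1))⁻¹) * (δ / (N + 1) * h + 1) := by
          have : (δ / (N + 1))⁻¹ * (δ / (N + 1) * h) = h := by field_simp
          have h3 : 0 ≤ δ / (N + 1) * h := by positivity
          have h4 : 0 < (δ / (N + 1))⁻¹ := by positivity
          nlinarith
      _ ≤ _ := by gcongr
  calc (1 + h) ^ N ≤ ((1 + (δ / (N + 1))⁻¹) * Real.exp (δ / (N + 1) * h)) ^ N := by gcongr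
    _ = (1 + (δ / (N + 1))⁻¹) ^ N * Real.exp (N * (δ / (N + 1) * h)) := by
        rw [mul_pow, ← Real.exp_nat_mul]
    _ ≤ _ := by
        apply mul_le_mul_of_nonneg_left _ (by positivity)
        apply Real.exp_le_exp.2
        have : (N : ℝ) * (δ / (N + 1) * h) = δ * h * (N / (N + 1)) := by ring
        rw [this]
        have h5 : (N : ℝ) / (N + 1) ≤ 1 := by rw [div_le_one (by positivity)]; linarith
        have h6 : 0 ≤ δ * h := by positivity
        nlinarith

theorem sum_exp_le {w : ℕ → ℝ} {w₀ δ : ℝ} (hw₀ : 0 < w₀) (hw : ∀ n, w₀ ≤ w n) (hm : Monotone w)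
    (hδ : 0 < δ) (n : ℕ) :
    ∑ k ∈ Finset.range n, Real.exp (-(δ * (urnH w n - urnH w (k + 1)))) * (w (k + 1))⁻¹ ≤
      Real.exp (δ / w₀) / δ := by
  have key : ∑ k ∈ Finset.range n, Real.exp (δ * urnH w (k + 1)) * (w (k + 1))⁻¹ ≤
      Real.exp (δ / w₀) / δ * Real.exp (δ * urnH w n) := by
    induction n with
    | zero => simp; positivity
    | succ n ih =>
      rw [Finset.sum_range_succ]
      have hwn : 0 < w n := hw₀.trans_le (hw n)
      have h1 : (w (n + 1))⁻¹ ≤ (w n)⁻¹ := inv_anti₀ hwn (hm (Nat.le_succ n))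
      have h2 : (w n)⁻¹ ≤ w₀⁻¹ := inv_anti₀ hw₀ (hw n)
      have h0 : 0 < (w n)⁻¹ := inv_pos.2 hwn
      rw [urnH_succ]
      set x := (w n)⁻¹
      have e1 : Real.exp (δ * (urnH w n + x)) = Real.exp (δ * urnH w n) * Real.exp (δ * x) := by
        rw [← Real.exp_add]; congr 1; ring
      rw [e1]
      set G := Real.exp (δ * urnH w n)
      have hG : 0 < G := Real.exp_pos _
      have h3 : Real.exp (δ * x) ≤ Real.exp (δ / w₀) := by
        rw [div_eq_mul_inv]; gcongr
      have h4 := Real.add_one_le_exp (δ * x)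
      set e := Real.exp (δ * x)
      set K := Real.exp (δ / w₀)
      have h5 : e * (w (n + 1))⁻¹ ≤ K / δ * (e - 1) := by
        calc e * (w (n + 1))⁻¹ ≤ K * x := by
              have := (inv_pos.2 (hw₀.trans_le (hw (n + 1)))).le
              gcongr
          _ = K / δ * (δ * x) := by field_simp
          _ ≤ _ := by gcongr; linarith
      have := mul_le_mul_of_nonneg_left h5 hG.le
      nlinarith
  have hG := Real.exp_pos (δ * urnH w n)
  have e : ∀ k, Real.exp (-(δ * (urnH w n - urnH w (k + 1)))) * (w (k + 1))⁻¹ =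
      (Real.exp (δ * urnH w (k + 1)) * (w (k + 1))⁻¹) * (Real.exp (δ * urnH w n))⁻¹ := by
    intro k
    rw [← Real.exp_neg, mul_right_comm, ← Real.exp_add]
    congr 2; ring
  simp only [e]
  rw [← Finset.sum_mul, ← div_eq_mul_inv, div_le_iff₀ hG]
  exact key

theorem w_le_n {w₀ b : ℝ} (hw₀ : 0 < w₀) (n : ℕ) (hn : 1 ≤ n) :
    w₀ + n * b ≤ (w₀ + b) * n := by
  have : (1 : ℝ) ≤ n := by exact_mod_cast hn
  nlinarith

/-- Small eigenvalues. -/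
theorem good_small {E : Type*} [NormedAddCommGroup E] [NormedSpace ℂ E] (T : Module.End ℂ E)
    {w₀ b : ℝ} (hw₀ : 0 < w₀) (hb : 0 < b) (lam : ℂ) (hlam : lam.re < b / 2) (m : ℕ) (v : E)
    (hv : ((T - lam • 1) ^ (m + 1)) v = 0) : ∃ C : ℝ, 0 ≤ C ∧ ∀ n : ℕ, 2 ≤ n →
      ∑ k ∈ Finset.range n, ‖urnPhi T (fun n : ℕ => w₀ + n * b) (k + 1) n v‖ ^ 2 ≤ C * n := by
  obtain ⟨C, hC, hg⟩ := growth T hw₀ hb lam m v hv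
  obtain ⟨C1, hC1, hg1⟩ := exp_H_le hw₀ hb
  have hδ : 0 < (b - 2 * lam.re) / 2 := by linarith
  set δ := (b - 2 * lam.re) / 2 with hδdef
  obtain ⟨C2, hC2, hg2⟩ := one_add_pow_le_exp hδ (2 * m)
  have hw : ∀ n : ℕ, w₀ ≤ w₀ + n * b := fun n => by
    have : 0 ≤ n * b := by positivity
    linarith
  have hwp : ∀ n : ℕ, 0 < w₀ + n * b := fun n => hw₀.trans_le (hw n)
  have hmono : Monotone (fun n : ℕ => w₀ + n * b) := fun i j hij => by
    dsimp only; gcongr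
  refine ⟨C ^ 2 * C2 * C1 * (w₀ + b) * (Real.exp (δ / w₀) / δ), by positivity, fun n hn => ?_⟩
  have hsum := sum_exp_le hw₀ hw hmono hδ n
  have hterm : ∀ k ∈ Finset.range n,
      ‖urnPhi T (fun n : ℕ => w₀ + n * b) (k + 1) n v‖ ^ 2 ≤
      (C ^ 2 * C2 * C1 * (w₀ + n * b)) *
      (Real.exp (-(δ * (urnH (fun n : ℕ => w₀ + n * b) n - urnH (fun n : ℕ => w₀ + n * b) (k + 1))))
        * (w₀ + (k + 1 : ℕ) * b)⁻¹) := by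
    intro k hk
    have hkn : k + 1 ≤ n := Finset.mem_range.1 hk
    have a0 := hg (k + 1) n hkn
    have a1 := hg1 (k + 1) n hkn
    have hh := sub_nonneg.2 (urnH_mono hwp hkn)
    set h := urnH (fun n : ℕ => w₀ + n * b) n - urnH (fun n : ℕ => w₀ + n * b) (k + 1)
    have a2 := hg2 h hh
    have p1 := hwp n
    have p2 := hwp (k + 1)
    calc _ ≤ (C * (Real.exp (lam.re * h) * (1 + h) ^ m)) ^ 2 := by gcongr
      _ = C ^ 2 * Real.exp (2 * lam.re * h) * (1 + h) ^ (2 * m) := by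
        rw [mul_pow, mul_pow, ← Real.exp_nat_mul, ← pow_mul, mul_comm m 2]
        push_cast
        ring_nf
      _ ≤ C ^ 2 * Real.exp (2 * lam.re * h) * (C2 * Real.exp (δ * h)) := by gcongr
      _ = C ^ 2 * C2 * Real.exp (-(δ * h)) * Real.exp (b * h) := by
        have : Real.exp (2 * lam.re * h) * Real.exp (δ * h) =
            Real.exp (-(δ * h)) * Real.exp (b * h) := by
          rw [← Real.exp_add, ← Real.exp_add]; congr 1; rw [hδdef]; ring
        linear_combination (C ^ 2 * C2) * this
      _ ≤ C ^ 2 * C2 * Real.exp (-(δ * h)) *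
          (C1 * ((w₀ + n * b) * (w₀ + (k + 1 : ℕ) * b)⁻¹)) := by gcongr
      _ = _ := by ring
  refine (Finset.sum_le_sum hterm).trans ?_
  rw [← Finset.mul_sum]
  have p1 := hwp n
  calc _ ≤ (C ^ 2 * C2 * C1 * ((w₀ + b) * n)) * (Real.exp (δ / w₀) / δ) := by
        gcongr
        exact w_le_n hw₀ n (by omega)
    _ = _ := by ring

theorem H_le_log {w₀ b : ℝ} (hw₀ : 0 < w₀) (hb : 0 < b) : ∃ C : ℝ, 0 < C ∧ ∀ n : ℕ, 2 ≤ n →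
    1 + urnH (fun n : ℕ => w₀ + n * b) n ≤ C * Real.log n := by
  obtain ⟨C1, hC1, hg1⟩ := exp_H_le hw₀ hb
  set D := C1 * (w₀ + b) * w₀⁻¹ with hD
  have hDp : 0 < D := by positivity
  have hl2 : 0 < Real.log 2 := Real.log_pos (by norm_num)
  refine ⟨(1 + b⁻¹ * |Real.log D|) / Real.log 2 + b⁻¹, by positivity, fun n hn => ?_⟩
  have hn2 : (2 : ℝ) ≤ n := by exact_mod_cast hn
  have h1 := hg1 0 n (Nat.zero_le n)
  have h2 : Real.exp (b * urnH (fun n : ℕ => w₀ + n * b) n) ≤ D * n := by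
    have e : urnH (fun n : ℕ => w₀ + n * b) 0 = 0 := by simp [urnH]
    rw [e, sub_zero] at h1
    refine h1.trans ?_
    have := w_le_n (b := b) hw₀ n (by omega)
    calc _ ≤ C1 * (((w₀ + b) * n) * (w₀ + (0 : ℕ) * b)⁻¹) := by
          have : 0 < (w₀ + ((0 : ℕ) : ℝ) * b) := by simpa using hw₀
          gcongr
      _ = _ := by rw [hD]; simp; ring
  have h3 : b * urnH (fun n : ℕ => w₀ + n * b) n ≤ Real.log D + Real.log n := by
    rw [← Real.log_mul hDp.ne' (by positivity)]
    rwa [Real.le_log_iff_exp_le (by positivity)]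
  have h4 : Real.log 2 ≤ Real.log n := Real.log_le_log (by norm_num) hn2
  have h5 : urnH (fun n : ℕ => w₀ + n * b) n ≤ b⁻¹ * |Real.log D| + b⁻¹ * Real.log n := by
    rw [← mul_add, ← div_eq_inv_mul, le_div_iff₀ hb]
    have := le_abs_self (Real.log D)
    linarith
  have h6 : 1 + b⁻¹ * |Real.log D| ≤ (1 + b⁻¹ * |Real.log D|) / Real.log 2 * Real.log n := by
    rw [div_mul_eq_mul_div, le_div_iff₀ hl2]
    gcongr
  linarith

/-- Critical eigenvalues. -/
theorem good_crit {E : Type*} [NormedAddCommGroup E] [NormedSpace ℂ E] (T : Module.End ℂ E)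
    {w₀ b : ℝ} (hw₀ : 0 < w₀) (hb : 0 < b) (lam : ℂ) (hlam : lam.re = b / 2) (m : ℕ) (v : E)
    (hv : ((T - lam • 1) ^ (m + 1)) v = 0) : ∃ C : ℝ, 0 ≤ C ∧ ∀ n : ℕ, 2 ≤ n →
      ∑ k ∈ Finset.range n, ‖urnPhi T (fun n : ℕ => w₀ + n * b) (k + 1) n v‖ ^ 2 ≤
        C * (n * Real.log n ^ (2 * m + 1)) := by
  obtain ⟨C, hC, hg⟩ := growth T hw₀ hb lam m v hv
  obtain ⟨C1, hC1, hg1⟩ := exp_H_le hw₀ hb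
  obtain ⟨C2, hC2, hg2⟩ := H_le_log hw₀ hb
  have hw : ∀ n : ℕ, w₀ ≤ w₀ + n * b := fun n => by
    have : 0 ≤ n * b := by positivity
    linarith
  have hwp : ∀ n : ℕ, 0 < w₀ + n * b := fun n => hw₀.trans_le (hw n)
  have hH0 : ∀ n : ℕ, 0 ≤ urnH (fun n : ℕ => w₀ + n * b) n := fun n =>
    Finset.sum_nonneg fun j _ => (inv_pos.2 (hwp j)).le
  refine ⟨C ^ 2 * C1 * (w₀ + b) * C2 ^ (2 * m + 1), by positivity, fun n hn => ?_⟩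
  have hlog := hg2 n hn
  have hH := hH0 n
  have hterm : ∀ k ∈ Finset.range n,
      ‖urnPhi T (fun n : ℕ => w₀ + n * b) (k + 1) n v‖ ^ 2 ≤
      (C ^ 2 * C1 * (w₀ + n * b) * (1 + urnH (fun n : ℕ => w₀ + n * b) n) ^ (2 * m)) *
        (w₀ + k * b)⁻¹ := by
    intro k hk
    have hkn : k + 1 ≤ n := Finset.mem_range.1 hk
    have a0 := hg (k + 1) n hkn
    have a1 := hg1 (k + 1) n hkn
    have hh := sub_nonneg.2 (urnH_mono hwp hkn)
    have hle : urnH (fun n : ℕ => w₀ + n * b) n - urnH (fun n : ℕ => w₀ + n * b) (k + 1) ≤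
      urnH (fun n : ℕ => w₀ + n * b) n := by linarith [hH0 (k + 1)]
    set h := urnH (fun n : ℕ => w₀ + n * b) n - urnH (fun n : ℕ => w₀ + n * b) (k + 1)
    have p1 := hwp n
    have p2 := hwp (k + 1)
    have p3 := hwp k
    calc _ ≤ (C * (Real.exp (lam.re * h) * (1 + h) ^ m)) ^ 2 := by gcongr
      _ = C ^ 2 * Real.exp (b * h) * (1 + h) ^ (2 * m) := by
        rw [mul_pow, mul_pow, ← Real.exp_nat_mul, ← pow_mul, mul_comm m 2, hlam]
        push_cast
        ring_nf
      _ ≤ C ^ 2 * (C1 * ((w₀ + n * b) * (w₀ + (k + 1 : ℕ) * b)⁻¹)) *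
          (1 + urnH (fun n : ℕ => w₀ + n * b) n) ^ (2 * m) := by gcongr
      _ ≤ C ^ 2 * (C1 * ((w₀ + n * b) * (w₀ + k * b)⁻¹)) *
          (1 + urnH (fun n : ℕ => w₀ + n * b) n) ^ (2 * m) := by
          gcongr
          simp
      _ = _ := by ring
  refine (Finset.sum_le_sum hterm).trans ?_
  rw [← Finset.mul_sum]
  have p1 := hwp n
  have hwn := w_le_n (b := b) hw₀ n (by omega)
  calc _ ≤ (C ^ 2 * C1 * (w₀ + n * b) * (1 + urnH (fun n : ℕ => w₀ + n * b) n) ^ (2 * m)) *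
        (1 + urnH (fun n : ℕ => w₀ + n * b) n) := by
        gcongr
        unfold urnH
        linarith
    _ = C ^ 2 * C1 * (w₀ + n * b) * (1 + urnH (fun n : ℕ => w₀ + n * b) n) ^ (2 * m + 1) := by
        ring
    _ ≤ C ^ 2 * C1 * ((w₀ + b) * n) * (C2 * Real.log n) ^ (2 * m + 1) := by gcongr
    _ = _ := by rw [mul_pow]; ring

/-- Vectors with the right variance bound. -/
def goodSub {E : Type*} [NormedAddCommGroup E] [NormedSpace ℂ E] (T : Module.End ℂ E)
    (w : ℕ → ℝ) (s : ℕ → ℝ) : Submodule ℂ E where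
  carrier := {v | ∃ C : ℝ, 0 ≤ C ∧ ∀ n : ℕ, 2 ≤ n →
      ∑ k ∈ Finset.range n, ‖urnPhi T w (k + 1) n v‖ ^ 2 ≤ C * s n}
  zero_mem' := ⟨0, le_rfl, fun n hn => by simp⟩
  add_mem' := by
    rintro u v ⟨C, hC, h⟩ ⟨D, hD, h'⟩
    refine ⟨2 * C + 2 * D, by positivity, fun n hn => ?_⟩
    calc _ ≤ ∑ k ∈ Finset.range n, (2 * ‖urnPhi T w (k + 1) n u‖ ^ 2 +
          2 * ‖urnPhi T w (k + 1) n v‖ ^ 2) := by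
          apply Finset.sum_le_sum
          intro k _
          rw [map_add]
          have := norm_add_le (urnPhi T w (k + 1) n u) (urnPhi T w (k + 1) n v)
          have h2 := pow_le_pow_left₀ (norm_nonneg _) this 2
          nlinarith [sq_nonneg (‖urnPhi T w (k + 1) n u‖ - ‖urnPhi T w (k + 1) n v‖)]
      _ ≤ _ := by
          rw [Finset.sum_add_distrib, ← Finset.mul_sum, ← Finset.mul_sum]
          linarith [h n hn, h' n hn]
  smul_mem' := by
    rintro c v ⟨C, hC, h⟩
    refine ⟨‖c‖ ^ 2 * C, by positivity, fun n hn => ?_⟩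
    simp only [map_smul, norm_smul, mul_pow]
    rw [← Finset.mul_sum, mul_assoc]
    exact mul_le_mul_of_nonneg_left (h n hn) (by positivity)

theorem mem_maxGen {q : ℕ} (B : Matrix (Fin q) (Fin q) ℂ) (lam : ℂ) (v : Fin q → ℂ) :
    v ∈ Module.End.maxGenEigenspace (Matrix.toLin' B) lam ↔
      ((B - lam • 1) ^ q).mulVec v = 0 := by
  rw [Module.End.maxGenEigenspace_eq_genEigenspace_finrank, Module.End.mem_genEigenspace_nat,
    LinearMap.mem_ker]
  have e : (Matrix.toLin' B - lam • 1) = Matrix.toLin' (B - lam • 1) := by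
    simp [Matrix.toLin'_one]; rfl
  rw [e, ← Matrix.toLin'_pow, Matrix.toLin'_apply]
  simp

theorem dot_pow {q : ℕ} (B : Matrix (Fin q) (Fin q) ℂ) (a : Fin q → ℂ) (b lam : ℂ)
    (ha : Matrix.vecMul a B = b • a) (n : ℕ) (v : Fin q → ℂ) :
    a ⬝ᵥ (((B - lam • 1) ^ n).mulVec v) = (b - lam) ^ n * (a ⬝ᵥ v) := by
  induction n generalizing v with
  | zero => simp
  | succ n ih =>
    rw [pow_succ, ← Matrix.mulVec_mulVec, ih, Matrix.sub_mulVec, dotProduct_sub,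
      dotProduct_mulVec, ha, Matrix.smul_mulVec, Matrix.one_mulVec, smul_dotProduct,
      dotProduct_smul]
    simp only [smul_eq_mul]
    ring

theorem mem_spectrum_of_pow {q : ℕ} (B : Matrix (Fin q) (Fin q) ℂ) (lam : ℂ) {v : Fin q → ℂ}
    (hv : v ≠ 0) (n : ℕ) (h : ((B - lam • 1) ^ n).mulVec v = 0) : lam ∈ spectrum ℂ B := by
  by_contra hc
  rw [spectrum.notMem_iff] at hc
  have h1 : IsUnit (B - lam • 1) := by
    have := hc.neg
    rwa [neg_sub, Algebra.algebraMap_eq_smul_one] at this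
  obtain ⟨u, hu⟩ := h1.pow n
  apply hv
  have : (((u⁻¹ : (Matrix (Fin q) (Fin q) ℂ)ˣ) : Matrix (Fin q) (Fin q) ℂ)).mulVec
      (((B - lam • 1) ^ n).mulVec v) = v := by
    rw [Matrix.mulVec_mulVec, ← hu, Units.inv_mul, Matrix.one_mulVec]
  rw [← this, h, Matrix.mulVec_zero]

theorem iSup_maxGen_le {q : ℕ} (B : Matrix (Fin q) (Fin q) ℂ) (W : Submodule ℂ (Fin q → ℂ))
    (h : ∀ (lam : ℂ) (v : Fin q → ℂ), ((B - lam • 1) ^ q).mulVec v = 0 → v ∈ W) (v : Fin q → ℂ) : v ∈ W := by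
  have h1 := Module.End.iSup_maxGenEigenspace_eq_top (Matrix.toLin' B)
  have h2 : (⨆ lam, Module.End.maxGenEigenspace (Matrix.toLin' B) lam) ≤ W :=
    iSup_le fun lam v hv => h lam v ((mem_maxGen B lam v).1 hv)
  rw [h1] at h2
  exact h2 trivial

theorem ker_le_of_eig {q : ℕ} (B : Matrix (Fin q) (Fin q) ℂ) (a : Fin q → ℂ) (b : ℂ)
    (ha : Matrix.vecMul a B = b • a) (hane : a ≠ 0)
    (hmult : Polynomial.rootMultiplicity b (Matrix.charpoly B) ≤ 1)
    (W : Submodule ℂ (Fin q → ℂ))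
    (hW : ∀ lam, lam ≠ b → lam ∈ spectrum ℂ B → ∀ v,
      ((B - lam • 1) ^ q).mulVec v = 0 → v ∈ W) :
    ∀ v, a ⬝ᵥ v = 0 → v ∈ W := by
  have hker : ∀ lam, lam ≠ b → ∀ v, ((B - lam • 1) ^ q).mulVec v = 0 → a ⬝ᵥ v = 0 := by
    intro lam hlam v hv
    have := dot_pow B a b lam ha q v
    rw [hv, dotProduct_zero] at this
    have h2 : (b - lam) ^ q ≠ 0 := pow_ne_zero _ (sub_ne_zero.2 hlam.symm)
    exact (mul_eq_zero.1 this.symm).resolve_left h2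
  let L : (Fin q → ℂ) →ₗ[ℂ] ℂ := dotProductBilin ℂ ℂ a
  have hL : ∀ v, L v = a ⬝ᵥ v := fun v => rfl
  have hy : ∃ y, ((B - b • 1) ^ q).mulVec y = 0 ∧ a ⬝ᵥ y ≠ 0 := by
    by_contra hc
    push Not at hc
    have : ∀ v, v ∈ LinearMap.ker L := iSup_maxGen_le B _ fun lam v hv => by
      rw [LinearMap.mem_ker, hL]
      by_cases h : lam = b
      · subst h; exact hc v hv
      · exact hker lam h v hv
    apply hane
    ext j
    have h := this (Pi.single j 1)
    rw [LinearMap.mem_ker, hL] at h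
    simpa using h
  obtain ⟨y, hy, hay⟩ := hy
  have hyne : y ≠ 0 := by rintro rfl; simp at hay
  have hdim : Module.finrank ℂ (Module.End.maxGenEigenspace (Matrix.toLin' B) b) ≤ 1 := by
    rw [LinearMap.finrank_maxGenEigenspace_eq, Matrix.charpoly_toLin']
    exact hmult
  have hspan : ∀ v, ((B - b • 1) ^ q).mulVec v = 0 → ∃ c : ℂ, c • y = v := by
    intro v hv
    have hd1 : Module.finrank ℂ (Module.End.maxGenEigenspace (Matrix.toLin' B) b) = 1 := by
      apply le_antisymm hdim
      apply Module.finrank_pos_iff_exists_ne_zero.2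
      refine ⟨⟨y, (mem_maxGen B b y).2 hy⟩, ?_⟩
      intro h
      exact hyne (congrArg Subtype.val h)
    obtain ⟨c, hc⟩ := (finrank_eq_one_iff_of_nonzero'
      (⟨y, (mem_maxGen B b y).2 hy⟩ : Module.End.maxGenEigenspace (Matrix.toLin' B) b)
      (fun h => hyne (congrArg Subtype.val h))).1 hd1 ⟨v, (mem_maxGen B b v).2 hv⟩
    exact ⟨c, congrArg Subtype.val hc⟩
  let R : (Fin q → ℂ) →ₗ[ℂ] (Fin q → ℂ) := LinearMap.id - ((a ⬝ᵥ y)⁻¹ • L).smulRight y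
  have hR : ∀ v, R v = v - ((a ⬝ᵥ y)⁻¹ * (a ⬝ᵥ v)) • y := fun v => rfl
  have key : ∀ v, v ∈ W.comap R := iSup_maxGen_le B _ fun lam v hv => by
    rw [Submodule.mem_comap, hR]
    by_cases h : lam = b
    · subst h
      obtain ⟨c, rfl⟩ := hspan v hv
      rw [dotProduct_smul, smul_eq_mul]
      have : (a ⬝ᵥ y)⁻¹ * (c * a ⬝ᵥ y) = c := by field_simp
      rw [this, sub_self]
      exact W.zero_mem
    · rw [hker lam h v hv, mul_zero, zero_smul, sub_zero]
      by_cases h0 : v = 0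
      · rw [h0]; exact W.zero_mem
      · exact hW lam h (mem_spectrum_of_pow B lam h0 q hv) v hv
  intro v hv
  have := key v
  rwa [Submodule.mem_comap, hR, hv, mul_zero, zero_smul, sub_zero] at this

theorem exists_specProj {q : ℕ} (B : Matrix (Fin q) (Fin q) ℂ) (lam : ℂ) :
    ∃ P, IsSpectralProj B lam P ∧ ∀ v, ((B - lam • 1) ^ q).mulVec (P.mulVec v) = 0 := by
  set f : Module.End ℂ (Fin q → ℂ) := Matrix.toLin' B with hf
  have hind := Module.End.independent_maxGenEigenspace f
  have htop := Module.End.iSup_maxGenEigenspace_eq_top f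
  have hc : IsCompl (Module.End.maxGenEigenspace f lam) (⨆ (j) (_ : j ≠ lam), Module.End.maxGenEigenspace f j) := by
    refine ⟨hind lam, codisjoint_iff.2 (top_le_iff.1 ?_)⟩
    rw [← htop]
    refine iSup_le fun j => ?_
    by_cases h : j = lam
    · rw [h]; exact le_sup_left
    · exact le_sup_of_le_right (le_iSup₂_of_le j h le_rfl)
  refine ⟨LinearMap.toMatrix' (Submodule.projection _ _ hc), ⟨?_, ?_⟩, ?_⟩
  · intro v hv
    rw [← Matrix.toLin'_apply, Matrix.toLin'_toMatrix']
    exact Submodule.projection_apply_left hc ⟨v, (mem_maxGen B lam v).2 hv⟩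
  · intro mu hmu v hv
    rw [← Matrix.toLin'_apply, Matrix.toLin'_toMatrix']
    apply (Submodule.projection_apply_eq_zero_iff hc).2
    exact (le_iSup₂_of_le (f := fun j (_ : j ≠ lam) => Module.End.maxGenEigenspace f j) mu hmu le_rfl)
      ((mem_maxGen B mu v).2 hv)
  · intro v
    rw [LinearMap.toMatrix'_mulVec]
    exact (mem_maxGen B lam _).1 (Submodule.projection_apply_mem hc v)

theorem nil_bound {q : ℕ} (B : Matrix (Fin q) (Fin q) ℂ) (lam : ℂ) (N : ℕ)
    (h : ∀ P ν, IsSpectralProj B lam P → NilIndexOf B lam P ν → ν ≤ N) (v : Fin q → ℂ)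
    (hv : ((B - lam • 1) ^ q).mulVec v = 0) : ((B - lam • 1) ^ (N + 1)).mulVec v = 0 := by
  classical
  obtain ⟨P, hP, hPr⟩ := exists_specProj B lam
  set C := B - lam • 1 with hC
  have hinv : ∀ x, (C ^ q).mulVec x = 0 → (C ^ q).mulVec (C.mulVec x) = 0 := by
    intro x hx
    rw [Matrix.mulVec_mulVec, ← pow_succ, pow_succ', ← Matrix.mulVec_mulVec, hx,
      Matrix.mulVec_zero]
  have hpow : ∀ j x, (C ^ q).mulVec x = 0 → ((C * P) ^ j).mulVec x = (C ^ j).mulVec x := by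
    intro j
    induction j with
    | zero => intro x _; simp
    | succ j ih =>
      intro x hx
      rw [pow_succ, ← Matrix.mulVec_mulVec, ← Matrix.mulVec_mulVec, hP.1 x hx, ih _ (hinv x hx),
        Matrix.mulVec_mulVec, ← pow_succ]
  have hnil : (C * P) ^ (q + 1) = 0 := by
    apply Matrix.ext_of_mulVec_single
    intro i
    rw [Matrix.zero_mulVec]
    set u : Fin q → ℂ := Pi.single i 1
    rw [pow_succ, ← Matrix.mulVec_mulVec, ← Matrix.mulVec_mulVec, hpow q _ (hinv _ (hPr u)),
      hinv _ (hPr u)]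
  have hex : ∃ ν, (C * P) ^ (ν + 1) = 0 := ⟨q, hnil⟩
  have hle := h P (Nat.find hex) hP ⟨Nat.find_spec hex, by
    rcases Nat.eq_zero_or_pos (Nat.find hex) with h0 | h0
    · exact Or.inl h0
    · right
      obtain ⟨m, hm⟩ := Nat.exists_eq_add_of_lt h0
      have := Nat.find_min hex (m := m) (by omega)
      have e : Nat.find hex = m + 1 := by omega
      rw [e]; exact this⟩
  rw [← hpow _ v hv]
  have : (C * P) ^ (N + 1) = 0 := by
    obtain ⟨d, hd⟩ := Nat.exists_eq_add_of_le hle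
    have : N + 1 = (Nat.find hex + 1) + d := by omega
    rw [this, pow_add, Nat.find_spec hex, zero_mul]
  rw [this, Matrix.zero_mulVec]

theorem toLin_pow_apply {q : ℕ} (B : Matrix (Fin q) (Fin q) ℂ) (lam : ℂ) (n : ℕ) (v : Fin q → ℂ) :
    ((Matrix.toLin' B - lam • (1 : Module.End ℂ (Fin q → ℂ))) ^ n) v =
      ((B - lam • 1) ^ n).mulVec v := by
  have e : (Matrix.toLin' B - lam • 1) = Matrix.toLin' (B - lam • 1) := by
    simp [Matrix.toLin'_one]; rfl
  rw [e, ← Matrix.toLin'_pow, Matrix.toLin'_apply]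

theorem vecMul_complex {q : ℕ} (a : Fin q → ℝ) (b : ℝ) (A : Matrix (Fin q) (Fin q) ℝ)
    (hA : Matrix.vecMul a A = b • a) :
    Matrix.vecMul (fun i => (a i : ℂ)) (A.map (fun x : ℝ => (x : ℂ))) =
      (b : ℂ) • (fun i => (a i : ℂ)) := by
  ext j
  have := congrFun hA j
  simp only [Matrix.vecMul, dotProduct, Pi.smul_apply, smul_eq_mul, Matrix.map_apply] at this ⊢
  exact_mod_cast congrArg (fun x : ℝ => (x : ℂ)) this

theorem good_case_a {q : ℕ} (hq : 2 ≤ q) (a : Fin q → ℝ) (ha : a ≠ 0) {b w₀ : ℝ} (hb : 0 < b)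
    (hw₀ : 0 < w₀) (A : Matrix (Fin q) (Fin q) ℝ) (hA : Matrix.vecMul a A = b • a)
    (h : ∀ mu : ℂ, MemSecondEigSet (A.map (fun x : ℝ => (x : ℂ))) b mu → mu.re < b / 2) :
    ∀ v : Fin q → ℂ, (fun i => (a i : ℂ)) ⬝ᵥ v = 0 →
      v ∈ goodSub (Matrix.toLin' (A.map (fun x : ℝ => (x : ℂ)))) (fun n : ℕ => w₀ + n * b)
        (fun n : ℕ => (n : ℝ)) := by
  refine ker_le_of_eig _ _ b (vecMul_complex a b A hA) ?_ ?_ _ ?_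
  · intro h0
    apply ha
    ext i
    simpa using congrFun h0 i
  · by_contra hc
    have := h b (Or.inr ⟨rfl, by omega⟩)
    simp at this
    linarith
  · intro lam hlam hsp v hv
    refine good_small _ hw₀ hb lam (h lam (Or.inl ⟨hlam, hsp⟩)) (q - 1) v ?_
    rw [toLin_pow_apply, Nat.sub_add_cancel (by omega)]
    exact hv

theorem good_case_b {q : ℕ} (hq : 2 ≤ q) (a : Fin q → ℝ) (ha : a ≠ 0) {b w₀ : ℝ} (hb : 0 < b)
    (hw₀ : 0 < w₀) (A : Matrix (Fin q) (Fin q) ℝ) (hA : Matrix.vecMul a A = b • a) (N : ℕ)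
    (h : ∀ mu : ℂ, MemSecondEigSet (A.map (fun x : ℝ => (x : ℂ))) b mu → mu.re ≤ b / 2)
    (hN : ∀ (mu : ℂ) (P' : Matrix (Fin q) (Fin q) ℂ) (ν' : ℕ),
        MemSecondEigSet (A.map (fun x : ℝ => (x : ℂ))) b mu → mu.re = b / 2 →
        IsSpectralProj (A.map (fun x : ℝ => (x : ℂ))) mu P' →
        NilIndexOf (A.map (fun x : ℝ => (x : ℂ))) mu P' ν' → ν' ≤ N) :
    ∀ v : Fin q → ℂ, (fun i => (a i : ℂ)) ⬝ᵥ v = 0 →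
      v ∈ goodSub (Matrix.toLin' (A.map (fun x : ℝ => (x : ℂ)))) (fun n : ℕ => w₀ + n * b)
        (fun n : ℕ => (n : ℝ) * Real.log n ^ (2 * N + 1)) := by
  refine ker_le_of_eig _ _ b (vecMul_complex a b A hA) ?_ ?_ _ ?_
  · intro h0
    apply ha
    ext i
    simpa using congrFun h0 i
  · by_contra hc
    have := h b (Or.inr ⟨rfl, by omega⟩)
    simp at this
    linarith
  · intro lam hlam hsp v hv
    have hmem : MemSecondEigSet (A.map (fun x : ℝ => (x : ℂ))) b lam := Or.inl ⟨hlam, hsp⟩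
    rcases (h lam hmem).lt_or_eq with hlt | heq
    · obtain ⟨C, hC, hg⟩ := good_small (Matrix.toLin' (A.map (fun x : ℝ => (x : ℂ)))) hw₀ hb lam
        hlt (q - 1) v (by rw [toLin_pow_apply, Nat.sub_add_cancel (by omega)]; exact hv)
      have hl2 : 0 < Real.log 2 := Real.log_pos (by norm_num)
      refine ⟨C * ((Real.log 2) ^ (2 * N + 1))⁻¹, by positivity, fun n hn => (hg n hn).trans ?_⟩
      have hn2 : (2 : ℝ) ≤ n := by exact_mod_cast hn
      have h4 : Real.log 2 ≤ Real.log n := Real.log_le_log (by norm_num) hn2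
      have h5 : 1 ≤ ((Real.log 2) ^ (2 * N + 1))⁻¹ * Real.log n ^ (2 * N + 1) := by
        rw [inv_mul_eq_div, one_le_div (by positivity)]
        gcongr
      have h6 : 0 ≤ C * n := by positivity
      calc C * n ≤ C * n * (((Real.log 2) ^ (2 * N + 1))⁻¹ * Real.log n ^ (2 * N + 1)) :=
            le_mul_of_one_le_right h6 h5
        _ = _ := by ring
    · refine good_crit _ hw₀ hb lam heq N v ?_
      rw [toLin_pow_apply]
      exact nil_bound _ lam N (fun P ν h1 h2 => hN lam P ν hmem heq h1 h2) v hv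

theorem ui_of_tail {F : Type*} [NormedAddCommGroup F] {Ω : Type} {m0 : MeasurableSpace Ω}
    {μ : Measure Ω} [IsProbabilityMeasure μ] {p : ℝ} (hp : 2 ≤ p) {Y : ℕ → Ω → F}
    (hY : ∀ n, AEStronglyMeasurable (Y n) μ)
    (hui : ∀ ε : ℝ, 0 < ε → ∃ M : ℝ, ∀ n : ℕ,
      ∫⁻ ω in {ω | M < ‖Y n ω‖ ^ p}, ENNReal.ofReal (‖Y n ω‖ ^ p) ∂μ ≤ ENNReal.ofReal ε) :
    UniformIntegrable Y (ENNReal.ofReal p) μ := by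
  have hp0 : 0 < p := by linarith
  refine uniformIntegrable_of (by simp; linarith) (by simp) hY fun ε hε => ?_
  obtain ⟨M, hM⟩ := hui (ε ^ p) (by positivity)
  refine ⟨Real.toNNReal ((|M| + 1) ^ p⁻¹), fun n => ?_⟩
  rw [eLpNorm_eq_lintegral_rpow_enorm_toReal (by simp; linarith) (by simp),
    ENNReal.toReal_ofReal hp0.le, one_div, ENNReal.rpow_inv_le_iff hp0,
    ENNReal.ofReal_rpow_of_pos hε]
  refine le_trans ?_ (hM n)
  refine le_trans ?_ (lintegral_indicator_le _ _)
  apply lintegral_mono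
  intro ω
  dsimp only
  by_cases h : ω ∈ {x | ((|M| + 1) ^ p⁻¹).toNNReal ≤ ‖Y n x‖₊}
  · have h2 : ω ∈ {ω | M < ‖Y n ω‖ ^ p} := by
      have h' : (|M| + 1) ^ p⁻¹ ≤ ‖Y n ω‖ := by
        have := Real.toNNReal_le_iff_le_coe.1 h
        simpa using this
      have h3 : ((|M| + 1) ^ p⁻¹) ^ p ≤ ‖Y n ω‖ ^ p := by gcongr
      rw [← Real.rpow_mul (by positivity), inv_mul_cancel₀ hp0.ne', Real.rpow_one] at h3
      have := le_abs_self M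
      show M < _
      linarith
    rw [Set.indicator_of_mem h, Set.indicator_of_mem h2, ← ofReal_norm,
      ENNReal.ofReal_rpow_of_nonneg (norm_nonneg _) hp0.le]
  · rw [Set.indicator_of_notMem h]
    simp [hp0]

theorem norm_le_sum_abs {q : ℕ} (x : EuclideanSpace ℝ (Fin q)) : ‖x‖ ≤ ∑ i, |x i| := by
  rw [EuclideanSpace.norm_eq]
  apply Real.sqrt_le_iff.2 ⟨Finset.sum_nonneg fun _ _ => abs_nonneg _, ?_⟩
  exact Finset.sum_sq_le_sq_sum_of_nonneg fun _ _ => norm_nonneg _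

/-- Real linear decomposition of the recursion. -/
theorem decomp_det {q : ℕ} (B : Matrix (Fin q) (Fin q) ℂ) (w : ℕ → ℝ) (U D : ℕ → Fin q → ℂ)
    (h0 : U 0 = 0)
    (hU : ∀ n, U (n + 1) = U n + (((w n)⁻¹ : ℝ) : ℂ) • (B.mulVec (U n)) + D n) (n : ℕ) :
    U n = ∑ k ∈ Finset.range n, urnPhi (Matrix.toLin' B) w (k + 1) n (D k) := by
  induction n with
  | zero => simp [h0]
  | succ n ih =>
    rw [Finset.sum_range_succ, urnPhi_self, hU]
    congr 1
    have : U n + (((w n)⁻¹ : ℝ) : ℂ) • (B.mulVec (U n)) =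
        (1 + (((w n)⁻¹ : ℝ) : ℂ) • Matrix.toLin' B : Module.End ℂ (Fin q → ℂ)) (U n) := by
      simp
    rw [this, ih, map_sum]
    apply Finset.sum_congr rfl
    intro k hk
    rw [urnPhi_succ _ _ (Finset.mem_range.1 hk)]
    rfl

theorem decomp_dir {q : ℕ} (a x₀ d : Fin q → ℝ)
    (hd : ∑ j, a j * d j = 0) :
    (fun i => (d i : ℂ)) = ∑ j, (d j : ℂ) •
      (fun i => (((if i = j then 1 else 0) - a j / (∑ j, a j * x₀ j) * x₀ i : ℝ) : ℂ)) := by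
  ext i
  simp only [Finset.sum_apply, Pi.smul_apply, smul_eq_mul]
  rw [show d i = ∑ j, d j * ((if i = j then 1 else 0) -
    a j / (∑ j, a j * x₀ j) * x₀ i) from ?_]
  · rw [Complex.ofReal_sum]
    apply Finset.sum_congr rfl
    intro j _
    rw [Complex.ofReal_mul]
  · simp only [mul_sub, Finset.sum_sub_distrib, mul_ite, mul_one, mul_zero, Finset.sum_ite_eq,
      Finset.mem_univ, if_true]
    have : ∑ j, d j * (a j / (∑ j, a j * x₀ j) * x₀ i) =
        (∑ j, a j * d j) * (x₀ i / (∑ j, a j * x₀ j)) := by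
      rw [Finset.sum_mul]
      apply Finset.sum_congr rfl
      intro j _
      ring
    rw [this, hd]
    ring

theorem dir_ker {q : ℕ} (a x₀ : Fin q → ℝ) (hw₀ : ∑ j, a j * x₀ j ≠ 0) (j : Fin q) :
    (fun i => (a i : ℂ)) ⬝ᵥ
      (fun i => (((if i = j then 1 else 0) - a j / (∑ j, a j * x₀ j) * x₀ i : ℝ) : ℂ)) = 0 := by
  simp only [dotProduct]
  have : ∑ i, a i * ((if i = j then 1 else 0) - a j / (∑ j, a j * x₀ j) * x₀ i) = 0 := by
    simp only [mul_sub, Finset.sum_sub_distrib, mul_ite, mul_one, mul_zero, Finset.sum_ite_eq',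
      Finset.mem_univ, if_true]
    have : ∑ i, a i * (a j / (∑ j, a j * x₀ j) * x₀ i) =
        (∑ i, a i * x₀ i) * (a j / (∑ j, a j * x₀ j)) := by
      rw [Finset.sum_mul]
      apply Finset.sum_congr rfl
      intro j _
      ring
    rw [this, mul_div_cancel₀ _ hw₀, sub_self]
  exact_mod_cast congrArg (fun x : ℝ => (x : ℂ)) this

theorem urn_ui {q : ℕ} {Ω : Type} {m0 : MeasurableSpace Ω}
    (μ : Measure Ω) [IsProbabilityMeasure μ] (ℱ : Filtration ℕ m0)
    (a : Fin q → ℝ) (b : ℝ) (hb : 0 < b)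
    (A : Matrix (Fin q) (Fin q) ℝ) (hA : Matrix.vecMul a A = b • a)
    (X : ℕ → Ω → EuclideanSpace ℝ (Fin q)) (hadp : Adapted ℱ X)
    (hXint : ∀ n, Integrable (X n) μ)
    (x₀ : EuclideanSpace ℝ (Fin q)) (hX0 : X 0 = fun _ => x₀)
    (hw₀ : 0 < ∑ j, a j * x₀ j)
    (hwn : ∀ n : ℕ, ∀ᵐ ω ∂μ, ∑ j, a j * X n ω j = (∑ j, a j * x₀ j) + (n : ℝ) * b)
    (hcond : ∀ n : ℕ, μ[fun ω => X (n + 1) ω - X n ω | ℱ n] =ᵐ[μ]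
      fun ω => ((∑ j, a j * x₀ j) + (n : ℝ) * b)⁻¹ • (Matrix.toEuclideanCLM (𝕜 := ℝ) A (X n ω)))
    (p : ℝ) (hp : 2 ≤ p)
    (hui : ∀ ε : ℝ, 0 < ε → ∃ M : ℝ, ∀ n : ℕ,
      ∫⁻ ω in {ω | M < ‖X (n + 1) ω - X n ω‖ ^ p},
        ENNReal.ofReal (‖X (n + 1) ω - X n ω‖ ^ p) ∂μ ≤ ENNReal.ofReal ε)
    (s : ℕ → ℝ) (hs : ∀ n, 2 ≤ n → 0 < s n)
    (hgood : ∀ v : Fin q → ℂ, (fun i => (a i : ℂ)) ⬝ᵥ v = 0 →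
      v ∈ goodSub (Matrix.toLin' (A.map (fun x : ℝ => (x : ℂ))))
        (fun n : ℕ => (∑ j, a j * x₀ j) + n * b) s) :
    UniformIntegrable (fun n ω => (1 / Real.sqrt (s n)) • (X n ω - ∫ ω', X n ω' ∂μ))
      (ENNReal.ofReal p) μ := by
  set w₀ := ∑ j, a j * x₀ j with hw₀def
  set B := A.map (fun x : ℝ => (x : ℂ)) with hB
  set w : ℕ → ℝ := fun n => w₀ + n * b with hw
  have hwp : ∀ n, 0 < w n := fun n => by simp only [hw]; positivity
  have hp1 : (1 : ENNReal) ≤ ENNReal.ofReal p := by simp; linarith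
  -- coordinates of increments
  set ξ : Fin q → ℕ → Ω → ℝ := fun j k ω => X (k + 1) ω j - X k ω j with hξ
  have hXm : ∀ n j, StronglyMeasurable[ℱ n] (fun ω => X n ω j) := fun n j => by
    have h1 : Measurable[ℱ n] (X n) := hadp n
    have h2 : Measurable (fun x : EuclideanSpace ℝ (Fin q) => x j) := by fun_prop
    exact (h2.comp h1).stronglyMeasurable
  have hξm : ∀ j k, StronglyMeasurable[ℱ (k + 1)] (ξ j k) := fun j k =>
    (hXm (k + 1) j).sub ((hXm k j).mono (ℱ.mono (Nat.le_succ k)))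
  have hXj : ∀ n j, Integrable (fun ω => X n ω j) μ := fun n j =>
    (EuclideanSpace.proj j : EuclideanSpace ℝ (Fin q) →L[ℝ] ℝ).integrable_comp (hXint n)
  have hEX : ∀ n j, (∫ ω, X n ω ∂μ) j = ∫ ω, X n ω j ∂μ := fun n j =>
    ((EuclideanSpace.proj j : EuclideanSpace ℝ (Fin q) →L[ℝ] ℝ).integral_comp_comm (hXint n)).symm
  have hYui : UniformIntegrable (fun n ω => X (n + 1) ω - X n ω) (ENNReal.ofReal p) μ :=
    ui_of_tail hp (fun n => ((hXint (n + 1)).sub (hXint n)).1) hui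
  have hYn : UniformIntegrable (fun n ω => ‖X (n + 1) ω - X n ω‖) (ENNReal.ofReal p) μ :=
    ui_of_tail hp (fun n => ((hXint (n + 1)).sub (hXint n)).1.norm) (by simpa using hui)
  have hξui : ∀ j, UniformIntegrable (ξ j) (ENNReal.ofReal p) μ := fun j => by
    refine ui_of_norm_le_sum (ι := Unit) hp1
      (g := fun _ n ω => ‖X (n + 1) ω - X n ω‖) (fun _ => hYn)
      (fun n => ((hXj (n + 1) j).sub (hXj n j)).1) (fun n => Eventually.of_forall fun ω => ?_)
    simp only [Finset.univ_unique, Finset.sum_singleton, abs_norm]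
    exact PiLp.norm_apply_le (X (n + 1) ω - X n ω) j
  -- conditional expectations
  have hce : ∀ j k, ∀ᵐ ω ∂μ, (μ[ξ j k | ℱ k]) ω = (w k)⁻¹ * (A.mulVec (fun i => X k ω i)) j := by
    intro j k
    have h1 := ContinuousLinearMap.comp_condExp_comm (m := ℱ k) (μ := μ)
      ((hXint (k + 1)).sub (hXint k)) (EuclideanSpace.proj j : EuclideanSpace ℝ (Fin q) →L[ℝ] ℝ)
    filter_upwards [h1, hcond k] with ω hω hω2
    have e : (EuclideanSpace.proj j : EuclideanSpace ℝ (Fin q) →L[ℝ] ℝ) ∘ (X (k + 1) - X k) =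
      ξ j k := rfl
    rw [e] at hω
    rw [← hω]
    have e2 : (X (k + 1) - X k) = fun ω => X (k + 1) ω - X k ω := rfl
    rw [e2]
    simp only [Function.comp_apply]
    rw [hω2]
    rfl
  have hEstep : ∀ j k, ∫ ω, X (k + 1) ω j ∂μ = ∫ ω, X k ω j ∂μ +
      (w k)⁻¹ * (A.mulVec (fun i => ∫ ω, X k ω i ∂μ)) j := by
    intro j k
    have h1 : ∫ ω, ξ j k ω ∂μ = ∫ ω, X (k + 1) ω j ∂μ - ∫ ω, X k ω j ∂μ :=
      integral_sub (hXj (k + 1) j) (hXj k j)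
    have h2 : ∫ ω, ξ j k ω ∂μ = (w k)⁻¹ * (A.mulVec (fun i => ∫ ω, X k ω i ∂μ)) j := by
      rw [← integral_condExp (ℱ.le k), integral_congr_ae (hce j k), integral_const_mul]
      congr 1
      simp only [Matrix.mulVec, dotProduct]
      rw [integral_finsetSum _ (fun i _ => (hXj k i).const_mul _)]
      simp only [integral_const_mul]
    linarith
  set D : Fin q → ℕ → Ω → ℝ := fun j k ω => ξ j k ω - (μ[ξ j k | ℱ k]) ω with hD
  set U : ℕ → Ω → Fin q → ℝ := fun n ω i => X n ω i - ∫ ω', X n ω' i ∂μ with hU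
  have hall : ∀ᵐ ω ∂μ, (∀ j k, (μ[ξ j k | ℱ k]) ω = (w k)⁻¹ * (A.mulVec (fun i => X k ω i)) j) ∧
      ∀ n : ℕ, ∑ j, a j * X n ω j = w₀ + (n : ℝ) * b := by
    have h1 : ∀ᵐ ω ∂μ, ∀ j k, (μ[ξ j k | ℱ k]) ω = (w k)⁻¹ * (A.mulVec (fun i => X k ω i)) j :=
      ae_all_iff.2 fun j => ae_all_iff.2 fun k => hce j k
    exact h1.and (ae_all_iff.2 hwn)
  -- direction vectors
  set dir : Fin q → Fin q → ℂ := fun j i =>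
    (((if i = j then 1 else 0) - a j / w₀ * x₀ i : ℝ) : ℂ) with hdir
  set c : Fin q × Fin q → ℕ → ℕ → ℝ := fun ij n k =>
    (1 / Real.sqrt (s n)) * (urnPhi (Matrix.toLin' B) w (k + 1) n (dir ij.2) ij.1).re with hc
  have hdec : ∀ n, ∀ᵐ ω ∂μ, ∀ i, (1 / Real.sqrt (s n)) * U n ω i =
      ∑ j, ∑ k ∈ Finset.range n, c (i, j) n k * D j k ω := by
    intro n
    filter_upwards [hall] with ω hω i
    obtain ⟨hω1, hω2⟩ := hω
    have hdet := decomp_det B w (fun n i => (U n ω i : ℂ)) (fun k j => (D j k ω : ℂ)) (by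
      ext i; simp [hU, hX0]) (by
      intro n
      ext i
      simp only [Pi.add_apply, Pi.smul_apply, smul_eq_mul]
      have e : (B.mulVec (fun i => (U n ω i : ℂ))) i = ((A.mulVec (U n ω) i : ℝ) : ℂ) := by
        simp only [Matrix.mulVec, dotProduct, hB, Matrix.map_apply]
        push_cast
        rfl
      rw [e]
      norm_cast
      have e2 : A.mulVec (U n ω) i = A.mulVec (fun i => X n ω i) i -
          A.mulVec (fun i => ∫ ω, X n ω i ∂μ) i := by
        rw [← Pi.sub_apply, ← Matrix.mulVec_sub]
        rfl
      rw [e2]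
      simp only [hU, hD, hξ]
      have h3 := hω1 i n
      simp only [hξ] at h3
      rw [h3, hEstep]
      ring) n
    have hDk : ∀ k, ∑ j, a j * D j k ω = 0 := by
      intro k
      have e1 : ∑ j, a j * D j k ω = ∑ j, a j * X (k + 1) ω j - ∑ j, a j * X k ω j -
          (w k)⁻¹ * (a ⬝ᵥ (A.mulVec (fun i => X k ω i))) := by
        simp only [hD, hω1, dotProduct, Finset.mul_sum]
        simp only [hξ]
        rw [← Finset.sum_sub_distrib, ← Finset.sum_sub_distrib]
        apply Finset.sum_congr rfl
        intro j _
        ring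
      have e2 : a ⬝ᵥ (A.mulVec (fun i => X k ω i)) = b * w k := by
        rw [dotProduct_mulVec, hA, smul_dotProduct, smul_eq_mul]
        congr 1
        exact hω2 k
      rw [e1, e2, hω2, hω2]
      have := (hwp k).ne'
      push_cast
      field_simp
      ring
    have hre : U n ω i = ∑ j, ∑ k ∈ Finset.range n,
        (urnPhi (Matrix.toLin' B) w (k + 1) n (dir j) i).re * D j k ω := by
      have h1 := congrArg Complex.re (congrFun hdet i)
      rw [Complex.ofReal_re] at h1
      rw [h1, Finset.sum_comm, Finset.sum_apply, Complex.re_sum]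
      apply Finset.sum_congr rfl
      intro k _
      have h2 := decomp_dir a x₀ (fun j => D j k ω) (hDk k)
      rw [h2, map_sum, Finset.sum_apply, Complex.re_sum]
      apply Finset.sum_congr rfl
      intro j _
      rw [map_smul, Pi.smul_apply, smul_eq_mul, Complex.re_ofReal_mul, mul_comm]
    rw [hre, Finset.mul_sum]
    apply Finset.sum_congr rfl
    intro j _
    rw [Finset.mul_sum]
    apply Finset.sum_congr rfl
    intro k _
    simp only [hc]
    ring
  have hcb : ∀ ij, ∃ C : ℝ, 0 ≤ C ∧ ∀ n, ∑ k ∈ Finset.range n, c ij n k ^ 2 ≤ C := by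
    intro ij
    obtain ⟨C, hC, hg⟩ := hgood (dir ij.2) (dir_ker a x₀ hw₀.ne' ij.2)
    refine ⟨C + c ij 1 0 ^ 2, by positivity, fun n => ?_⟩
    have hsq := sq_nonneg (c ij 1 0)
    match n with
    | 0 => simp; positivity
    | 1 => simp; exact hC
    | n + 2 =>
      have h1 := hg (n + 2) (by omega)
      have h2 := hs (n + 2) (by omega)
      have h3 : ∑ k ∈ Finset.range (n + 2), c ij (n + 2) k ^ 2 ≤
          (s (n + 2))⁻¹ * ∑ k ∈ Finset.range (n + 2),
            ‖urnPhi (Matrix.toLin' B) w (k + 1) (n + 2) (dir ij.2)‖ ^ 2 := by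
        rw [Finset.mul_sum]
        apply Finset.sum_le_sum
        intro k _
        simp only [hc]
        rw [mul_pow, div_pow, Real.sq_sqrt h2.le, one_pow, one_div]
        apply mul_le_mul_of_nonneg_left _ (inv_pos.2 h2).le
        rw [← sq_abs]
        gcongr
        exact (Complex.abs_re_le_norm _).trans (norm_le_pi_norm _ _)
      have h4 : (s (n + 2))⁻¹ * (C * s (n + 2)) = C := by field_simp
      have h5 := mul_le_mul_of_nonneg_left h1 (inv_pos.2 h2).le
      linarith
  refine ui_of_norm_le_sum (ι := Fin q × Fin q) hp1
    (g := fun ij n ω => ∑ k ∈ Finset.range n, c ij n k * D ij.2 k ω) ?_ ?_ ?_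
  · intro ij
    obtain ⟨C, hC, hcC⟩ := hcb ij
    exact mart_unifIntegrable hp hC μ ℱ (ξ ij.2) (hξm ij.2) (hξui ij.2) (c ij) hcC
  · intro n
    exact (((hXint n).sub (integrable_const _)).smul (1 / Real.sqrt (s n))).1
  · intro n
    filter_upwards [hdec n] with ω hω
    refine (norm_le_sum_abs _).trans ?_
    rw [Fintype.sum_prod_type]
    apply Finset.sum_le_sum
    intro i _
    have e : ((1 / Real.sqrt (s n)) • (X n ω - ∫ ω', X n ω' ∂μ) : EuclideanSpace ℝ (Fin q)) i =
        (1 / Real.sqrt (s n)) * U n ω i := by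
      simp [hU, hEX]
    rw [e, hω i]
    exact Finset.abs_sum_le_sum_abs _ _

/-- Under the Pólya urn hypotheses, let p ≥ 2 be fixed and assume that the
family {|X_{n+1} − X_n|^p : n ≥ 0} is uniformly integrable. Assume also either
(a) Re λ₂ < b/2 and (X_n − E X_n)/√n ⇒ N(0, Σ), or
(b) Re λ₂ = b/2 and (X_n − E X_n)/√(n (log n)^{2ν₂+1}) ⇒ N(0, Σ), ν₂ := ν_{λ₂}.
Then the corresponding convergence in distribution holds together with convergence of all
absolute moments of order r with 1 ≤ r ≤ p and of all mixed moments of total degree ≤ p.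
(N(0, Σ) is characterized by: every linear image l·Z has the one-dimensional law
N(0, l'Σl); uniform integrability of (Z_t) means: ∀ ε > 0 there is M with
E[|Z_t| 1{|Z_t| > M}] ≤ ε for all t.) -/
theorem urn_clt_moment_convergence_of_unifIntegrable
    (q : ℕ) (hq : 2 ≤ q) {Ω : Type} {m0 : MeasurableSpace Ω}
    (μ : Measure Ω) [IsProbabilityMeasure μ] (ℱ : Filtration ℕ m0)
    (a : Fin q → ℝ) (b : ℝ) (hb : 0 < b)
    (A : Matrix (Fin q) (Fin q) ℝ) (hA : Matrix.vecMul a A = b • a)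
    (X : ℕ → Ω → EuclideanSpace ℝ (Fin q)) (hadp : Adapted ℱ X)
    (hXint : ∀ n, Integrable (X n) μ)
    (x₀ : EuclideanSpace ℝ (Fin q)) (hX0 : X 0 = fun _ => x₀)
    (hw₀ : 0 < ∑ j, a j * x₀ j)
    (hwn : ∀ n : ℕ, ∀ᵐ ω ∂μ, ∑ j, a j * X n ω j = (∑ j, a j * x₀ j) + (n : ℝ) * b)
    (hcond : ∀ n : ℕ, μ[fun ω => X (n + 1) ω - X n ω | ℱ n] =ᵐ[μ]
      fun ω => ((∑ j, a j * x₀ j) + (n : ℝ) * b)⁻¹ • (Matrix.toEuclideanCLM (𝕜 := ℝ) A (X n ω)))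
    (p : ℝ) (hp : 2 ≤ p)
    (hui : ∀ ε : ℝ, 0 < ε → ∃ M : ℝ, ∀ n : ℕ,
      ∫⁻ ω in {ω | M < ‖X (n + 1) ω - X n ω‖ ^ p},
        ENNReal.ofReal (‖X (n + 1) ω - X n ω‖ ^ p) ∂μ ≤ ENNReal.ofReal ε)
    (hspec : (b : ℂ) ∈ spectrum ℂ (A.map (fun x : ℝ => (x : ℂ))))
    (hmax : ∀ mu ∈ spectrum ℂ (A.map (fun x : ℝ => (x : ℂ))), mu.re ≤ b)
    (Sig : Matrix (Fin q) (Fin q) ℝ) (hSig : Sig.PosSemidef)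
    (νlim : Measure (EuclideanSpace ℝ (Fin q))) (hνlim : IsProbabilityMeasure νlim)
    (hGauss : ∀ l : Fin q → ℝ,
      Measure.map (fun x : EuclideanSpace ℝ (Fin q) => ∑ j, l j * x j) νlim =
        ProbabilityTheory.gaussianReal 0 (Real.toNNReal (∑ i, ∑ j, l i * Sig i j * l j))) :
    -- Case (a): Re λ₂ < b/2, scaling √n.
    ((∀ mu : ℂ, MemSecondEigSet (A.map (fun x : ℝ => (x : ℂ))) b mu → mu.re < b / 2) →
      (∀ f : BoundedContinuousFunction (EuclideanSpace ℝ (Fin q)) ℝ,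
        Tendsto (fun n : ℕ =>
            ∫ ω, f ((1 / Real.sqrt n) • (X n ω - ∫ ω', X n ω' ∂μ)) ∂μ)
          atTop (nhds (∫ x, f x ∂νlim))) →
      (∀ r : ℝ, 1 ≤ r → r ≤ p →
        Tendsto (fun n : ℕ =>
            ∫ ω, ‖(1 / Real.sqrt n) • (X n ω - ∫ ω', X n ω' ∂μ)‖ ^ r ∂μ)
          atTop (nhds (∫ x, ‖x‖ ^ r ∂νlim))) ∧
      (∀ α : Fin q → ℕ, (∑ j, (α j : ℝ)) ≤ p →
        Tendsto (fun n : ℕ =>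
            ∫ ω, ∏ j, ((1 / Real.sqrt n) • (X n ω - ∫ ω', X n ω' ∂μ) :
              EuclideanSpace ℝ (Fin q)) j ^ α j ∂μ)
          atTop (nhds (∫ x : EuclideanSpace ℝ (Fin q), ∏ j, x j ^ α j ∂νlim)))) ∧
    -- Case (b): Re λ₂ = b/2, scaling √(n (log n)^{2ν₂+1}).
    (∀ (lam2 : ℂ) (P2 : Matrix (Fin q) (Fin q) ℂ) (ν₂ : ℕ),
      MemSecondEigSet (A.map (fun x : ℝ => (x : ℂ))) b lam2 → lam2.re = b / 2 →
      (∀ mu : ℂ, MemSecondEigSet (A.map (fun x : ℝ => (x : ℂ))) b mu → mu.re ≤ b / 2) →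
      IsSpectralProj (A.map (fun x : ℝ => (x : ℂ))) lam2 P2 →
      NilIndexOf (A.map (fun x : ℝ => (x : ℂ))) lam2 P2 ν₂ →
      (∀ (mu : ℂ) (P' : Matrix (Fin q) (Fin q) ℂ) (ν' : ℕ),
        MemSecondEigSet (A.map (fun x : ℝ => (x : ℂ))) b mu → mu.re = b / 2 →
        IsSpectralProj (A.map (fun x : ℝ => (x : ℂ))) mu P' →
        NilIndexOf (A.map (fun x : ℝ => (x : ℂ))) mu P' ν' → ν' ≤ ν₂) →
      (∀ f : BoundedContinuousFunction (EuclideanSpace ℝ (Fin q)) ℝ,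
        Tendsto (fun n : ℕ =>
            ∫ ω, f ((1 / Real.sqrt ((n : ℝ) * Real.log n ^ (2 * ν₂ + 1))) •
              (X n ω - ∫ ω', X n ω' ∂μ)) ∂μ)
          atTop (nhds (∫ x, f x ∂νlim))) →
      (∀ r : ℝ, 1 ≤ r → r ≤ p →
        Tendsto (fun n : ℕ =>
            ∫ ω, ‖(1 / Real.sqrt ((n : ℝ) * Real.log n ^ (2 * ν₂ + 1))) •
              (X n ω - ∫ ω', X n ω' ∂μ)‖ ^ r ∂μ)
          atTop (nhds (∫ x, ‖x‖ ^ r ∂νlim))) ∧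
      (∀ α : Fin q → ℕ, (∑ j, (α j : ℝ)) ≤ p →
        Tendsto (fun n : ℕ =>
            ∫ ω, ∏ j, ((1 / Real.sqrt ((n : ℝ) * Real.log n ^ (2 * ν₂ + 1))) •
              (X n ω - ∫ ω', X n ω' ∂μ) : EuclideanSpace ℝ (Fin q)) j ^ α j ∂μ)
          atTop (nhds (∫ x : EuclideanSpace ℝ (Fin q), ∏ j, x j ^ α j ∂νlim)))) := by
  have ha : a ≠ 0 := by
    rintro rfl
    simp at hw₀
  constructor
  · intro h hw
    have hUI := urn_ui μ ℱ a b hb A hA X hadp hXint x₀ hX0 hw₀ hwn hcond p hp hui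
      (fun n : ℕ => (n : ℝ)) (fun n hn => by positivity) (good_case_a hq a ha hb hw₀ A hA h)
    exact moments_of_ui hp Sig νlim hνlim hGauss hUI hw
  · intro lam2 P2 ν₂ _ _ h _ _ hN hw
    have hUI := urn_ui μ ℱ a b hb A hA X hadp hXint x₀ hX0 hw₀ hwn hcond p hp hui
      (fun n : ℕ => (n : ℝ) * Real.log n ^ (2 * ν₂ + 1)) (fun n hn => by
        have hn2 : (2 : ℝ) ≤ n := by exact_mod_cast hn
        have : 0 < Real.log n := Real.log_pos (by linarith)
        positivity) (good_case_b hq a ha hb hw₀ A hA ν₂ h hN)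
    exact moments_of_ui hp Sig νlim hνlim hGauss hUI hw
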